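/- arXiv:1510.05904 — 13 statements merged into one kernel-verified Lean document; each statement's English description precedes it below -/
import Mathlib

section
/- Let m be a positive integer, let G be an m-boundedly generated group, and let L ≤ G be a subgroup of finite index. Then there exists a subgroup U ≤ L of finite index in G that can be generated by m elements. -/
/-- A group `G` is `m`-boundedly generated (witnessed by `g : Fin m → G`) if every
element of `G` is a product `g 0 ^ k 0 * g 1 ^ k 1 * ⋯ * g (m-1) ^ k (m-1)`
for some integers `k i`, i.e. `G = ⟨g 0⟩⟨g 1⟩⋯⟨g (m-1)⟩` as a set. -/
def IsBoundedlyGeneratedBy {G : Type*} [Group G] (m : ℕ) (g : Fin m → G) : Prop :=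
  ∀ x : G, ∃ k : Fin m → ℤ, x = (List.ofFn fun i => g i ^ k i).prod

/-- If the `n`-th powers of `G` lie in a normal subgroup `N`, then the product set
`⟨g 0⟩⟨g 1⟩⋯⟨g (m-1)⟩` is covered by finitely many left cosets of subgroups of `N`,
each generated by at most `m` elements. -/
theorem exists_finset_leftCoset_cover_of_pow_mem {G : Type*} [Group G] (N : Subgroup G)
    [N.Normal] {n : ℕ} (hn : 0 < n) (hN : ∀ x : G, x ^ n ∈ N) (m : ℕ) (g : Fin m → G) :
    ∃ F : Finset (G × Finset G),
      (∀ p ∈ F, p.2.card ≤ m ∧ (p.2 : Set G) ⊆ N) ∧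
      ∀ k : Fin m → ℤ, ∃ p ∈ F,
        p.1⁻¹ * (List.ofFn fun i => g i ^ k i).prod ∈ Subgroup.closure (p.2 : Set G) := by
  classical
  induction m with
  | zero => exact ⟨{(1, ∅)}, by simp, by simp⟩
  | succ m ih =>
    obtain ⟨F, hF, hcover⟩ := ih fun i => g i.succ
    refine ⟨(Finset.range n ×ˢ F).image fun q =>
      (g 0 ^ q.1 * q.2.1, insert (q.2.1⁻¹ * g 0 ^ n * q.2.1) q.2.2), ?_, fun k => ?_⟩
    · simp only [Finset.mem_image, Finset.mem_product]
      rintro _ ⟨⟨r, c, T⟩, ⟨-, hp⟩, rfl⟩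
      obtain ⟨hcard, hsub⟩ := hF _ hp
      refine ⟨(Finset.card_insert_le _ _).trans (Nat.succ_le_succ hcard), ?_⟩
      rw [Finset.coe_insert, Set.insert_subset_iff]
      refine ⟨?_, hsub⟩
      simpa using Subgroup.Normal.conj_mem ‹N.Normal› _ (hN (g 0)) c⁻¹
    · obtain ⟨⟨c, T⟩, hp, hx⟩ := hcover fun i => k i.succ
      have hn' : (n : ℤ) ≠ 0 := by exact_mod_cast hn.ne'
      obtain ⟨r, hr⟩ := Int.eq_ofNat_of_zero_le (Int.emod_nonneg (k 0) hn')
      have hrn : r < n := by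
        have := Int.emod_lt_of_pos (k 0) (by exact_mod_cast hn : (0 : ℤ) < n)
        omega
      refine ⟨_, Finset.mem_image_of_mem _
        (Finset.mem_product.2 ⟨Finset.mem_range.2 hrn, hp⟩ : (r, c, T) ∈ _), ?_⟩
      have hk : g 0 ^ k 0 = g 0 ^ r * (g 0 ^ n) ^ (k 0 / n) := by
        rw [← zpow_natCast, ← zpow_natCast, ← zpow_mul, ← zpow_add, ← hr,
          Int.emod_add_mul_ediv]
      have hconj : (c⁻¹ * g 0 ^ n * c) ^ (k 0 / n) = c⁻¹ * (g 0 ^ n) ^ (k 0 / n) * c := by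
        simpa using conj_zpow (i := k 0 / n) (a := c⁻¹) (b := g 0 ^ n)
      rw [List.ofFn_succ, List.prod_cons, hk]
      have hmem := mul_mem
        (zpow_mem (Subgroup.subset_closure (Set.mem_insert (c⁻¹ * g 0 ^ n * c) (T : Set G)))
          (k 0 / n))
        (Subgroup.closure_mono (Set.subset_insert _ _) hx)
      rw [hconj] at hmem
      rw [Finset.coe_insert]
      convert hmem using 1
      group

/-- Let `m` be a positive integer, let `G` be an `m`-boundedly generated group, and let
`L ≤ G` be a subgroup of finite index.  Then there exists a subgroup `U ≤ L` of finite
index in `G` that can be generated by `m` elements. -/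
theorem bounded_generation_finite_index_subgroup_with_small_rank
    {G : Type*} [Group G] (m : ℕ) (hm : 0 < m)
    (hbg : ∃ g : Fin m → G, IsBoundedlyGeneratedBy m g)
    (L : Subgroup G) (hL : L.index ≠ 0) :
    ∃ U : Subgroup G, U ≤ L ∧ U.index ≠ 0 ∧
      ∃ S : Finset G, S.card ≤ m ∧ Subgroup.closure (S : Set G) = U := by
  obtain ⟨g, hg⟩ := hbg
  have : L.FiniteIndex := ⟨hL⟩
  obtain ⟨F, hF, hcover⟩ := exists_finset_leftCoset_cover_of_pow_mem L.normalCore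
    (Nat.pos_of_ne_zero (Subgroup.FiniteIndex.index_ne_zero (H := L.normalCore)))
    (fun x => L.normalCore.pow_index_mem x) m g
  obtain ⟨p, hp, hfin⟩ := Subgroup.exists_finiteIndex_of_leftCoset_cover
    (s := F) (g := Prod.fst) (H := fun p => Subgroup.closure (p.2 : Set G)) (by
      refine Set.eq_univ_of_forall fun x => ?_
      obtain ⟨k, rfl⟩ := hg x
      obtain ⟨p, hp, hx⟩ := hcover k
      exact Set.mem_iUnion₂.2 ⟨p, hp, mem_leftCoset_iff _ |>.2 hx⟩)
  exact ⟨_, ((Subgroup.closure_le _).2 (hF p hp).2).trans L.normalCore_le,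
    hfin.index_ne_zero, p.2, (hF p hp).1, rfl⟩
end

section
/- Let m be a positive integer, let G be an m-boundedly generated group, and let L ≤ G be a subgroup of finite index n. Then rank(L) ≤ 2·m²·√(n·log(n)) + m, where log denotes the natural logarithm. -/
open Chebyshev
open scoped Pointwise

theorem lcmUpto_le_six_pow : ∀ n < 64, Nat.lcmUpto n ≤ 6 ^ n := by
  decide +kernel

/-- An explicit Chebyshev bound, sharper than `Chebyshev.psi_le_const_mul_self`. -/
theorem psi_le_mul_self {x : ℝ} (hx : 0 ≤ x) : ψ x ≤ 1.9 * x := by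
  suffices h : ∀ n : ℕ, ψ n ≤ 1.9 * n by
    rw [psi_eq_psi_coe_floor]
    have := Nat.floor_le hx
    linarith [h ⌊x⌋₊]
  intro n
  induction n using Nat.strong_induction_on with
  | _ n ih =>
  rcases lt_or_ge n 64 with hn | hn
  · have h6 : Real.log 6 ≤ 1.9 := by
      have : Real.log ((6 : ℝ) ^ 10) ≤ Real.log ((2 : ℝ) ^ 26) :=
        Real.log_le_log (by norm_num) (by norm_num)
      rw [Real.log_pow, Real.log_pow] at this
      push_cast at this
      linarith [Real.log_two_lt_d9]
    rw [psi_eq_log_lcmUpto]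
    calc Real.log (Nat.lcmUpto n) ≤ Real.log ((6 : ℝ) ^ n) := by
          apply Real.log_le_log
          · exact_mod_cast Nat.lcmUpto_pos n
          · exact_mod_cast lcmUpto_le_six_pow n hn
      _ = n * Real.log 6 := Real.log_pow _ _
      _ ≤ 1.9 * n := by nlinarith [(Nat.cast_nonneg n : (0 : ℝ) ≤ n)]
  · have hn' : (64 : ℝ) ≤ n := by exact_mod_cast hn
    have psi_le_of_le : ∀ y c : ℝ, 0 ≤ y → c < 1 → y ≤ c * n → ψ y ≤ 1.9 * (c * n) := by
      intro y c hy hc hyc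
      have hfloor := Nat.floor_le hy
      have hlt : ⌊y⌋₊ < n := by
        have : (⌊y⌋₊ : ℝ) < n := by nlinarith
        exact_mod_cast this
      rw [psi_eq_psi_coe_floor]
      linarith [ih _ hlt]
    have sqrt_le : (n : ℝ) ^ (2 : ℝ)⁻¹ ≤ 1 / 8 * n := by
      rw [Real.rpow_inv_le_iff_of_pos (by positivity) (by positivity) (by norm_num)]
      norm_cast
      nlinarith
    have cbrt_le : (n : ℝ) ^ (3 : ℝ)⁻¹ ≤ 1 / 16 * n := by
      rw [Real.rpow_inv_le_iff_of_pos (by positivity) (by positivity) (by norm_num)]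
      norm_cast
      nlinarith [mul_le_mul hn' hn' (by norm_num) (by positivity)]
    have fifth_root_le : (n : ℝ) ^ (5 : ℝ)⁻¹ ≤ 1 / 16 * n :=
      (Real.rpow_le_rpow_of_exponent_le (by linarith) (by norm_num)).trans cbrt_le
    have hlog4 : Real.log 4 ≤ 1.3863 := by
      have : Real.log ((2 : ℝ) ^ 2) = 2 * Real.log 2 := by rw [Real.log_pow]; norm_num
      norm_num at this
      linarith [Real.log_two_lt_d9]
    have htheta := theta_le_log4_mul_x (x := n) (by positivity)
    have := psi_sub_theta_le_psi_add_psi_add_psi n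
    have := psi_le_of_le _ _ (by positivity) (by norm_num) sqrt_le
    have := psi_le_of_le _ _ (by positivity) (by norm_num) cbrt_le
    have := psi_le_of_le _ _ (by positivity) (by norm_num) fifth_root_le
    nlinarith

/-- Short cycles contribute at most `lcm {1, …, ⌊t⌋}` to the order of a permutation, and there are
at most `card α / t` long ones. -/
theorem log_orderOf_perm_le {α : Type*} [Fintype α] [DecidableEq α] (σ : Equiv.Perm α)
    {t : ℝ} (ht : 0 < t) :
    Real.log (orderOf σ) ≤ 1.9 * t + Fintype.card α / t * Real.log (Fintype.card α) := by
  set long := σ.cycleType.filter (fun a => ⌊t⌋₊ < a) with hlong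
  have hle : long ≤ σ.cycleType := Multiset.filter_le _ _
  have hdvd : orderOf σ ∣ Nat.lcmUpto ⌊t⌋₊ * long.prod := by
    rw [← σ.lcm_cycleType, Multiset.lcm_dvd]
    intro a ha
    by_cases h : ⌊t⌋₊ < a
    · exact (Multiset.dvd_prod (Multiset.mem_filter.2 ⟨ha, h⟩)).mul_left _
    · refine Dvd.dvd.mul_right ?_ _
      have := Equiv.Perm.two_le_of_mem_cycleType ha
      exact Finset.dvd_lcm (f := id) (Finset.mem_Icc.2 ⟨by lia, by lia⟩)
  have hprod_pos : 0 < long.prod := by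
    refine Nat.pos_of_ne_zero (Multiset.prod_ne_zero fun h0 => ?_)
    simpa using Equiv.Perm.two_le_of_mem_cycleType (Multiset.mem_of_le hle h0)
  have hsum : long.sum ≤ Fintype.card α :=
    by
    obtain ⟨short, hshort⟩ := Multiset.le_iff_exists_add.1 hle
    have := σ.sum_cycleType_le
    rw [hshort, Multiset.sum_add] at this
    lia
  have hprod : long.prod ≤ Fintype.card α ^ long.card :=
    Multiset.prod_le_pow_card _ _ fun a ha => (Multiset.single_le_sum (by simp) a ha).trans hsum
  have hcard : (long.card : ℝ) ≤ Fintype.card α / t := by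
    rw [le_div_iff₀ ht]
    have h1 : long.card * (⌊t⌋₊ + 1) ≤ Fintype.card α := by
      refine le_trans ?_ hsum
      rw [← smul_eq_mul]
      exact Multiset.card_nsmul_le_sum fun a ha => (Multiset.mem_filter.1 ha).2
    have h2 : (long.card : ℝ) * (⌊t⌋₊ + 1) ≤ Fintype.card α := by exact_mod_cast h1
    nlinarith [Nat.lt_floor_add_one t, (Nat.cast_nonneg long.card : (0 : ℝ) ≤ long.card)]
  have hlcm : (Nat.lcmUpto ⌊t⌋₊ : ℝ) ≠ 0 := by exact_mod_cast Nat.lcmUpto_ne_zero _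
  calc Real.log (orderOf σ) ≤ Real.log ((Nat.lcmUpto ⌊t⌋₊ : ℝ) * long.prod) := by
        apply Real.log_le_log
        · exact_mod_cast orderOf_pos σ
        · exact_mod_cast Nat.le_of_dvd (Nat.mul_pos (Nat.lcmUpto_pos _) hprod_pos) hdvd
    _ = Real.log (Nat.lcmUpto ⌊t⌋₊) + Real.log long.prod :=
        Real.log_mul hlcm (by exact_mod_cast hprod_pos.ne')
    _ ≤ 1.9 * t + long.card * Real.log (Fintype.card α) := by
        rw [← psi_eq_log_lcmUpto, ← psi_eq_psi_coe_floor, ← Real.log_pow]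
        refine add_le_add (psi_le_mul_self ht.le) (Real.log_le_log ?_ ?_)
        · exact_mod_cast hprod_pos
        · exact_mod_cast hprod
    _ ≤ _ := by gcongr

/-- An explicit form of Landau's bound on the order of a permutation. -/
theorem logb_orderOf_perm_le {α : Type*} [Fintype α] [DecidableEq α] (σ : Equiv.Perm α) :
    Real.logb 2 (orderOf σ) ≤
      4 * Real.sqrt (Fintype.card α * Real.log (Fintype.card α)) := by
  rcases le_or_gt (Fintype.card α) 1 with h | h
  · have : Subsingleton α := Fintype.card_le_one_iff_subsingleton.1 h
    rw [Subsingleton.elim σ 1, orderOf_one, Nat.cast_one, Real.logb_one]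
    positivity
  set n : ℝ := (Fintype.card α : ℝ) with hn
  have hn1 : 1 < n := by rw [hn]; exact_mod_cast h
  have hlog : 0 < Real.log n := Real.log_pos hn1
  set s := Real.sqrt (n * Real.log n) with hs
  have hs0 : 0 < s := Real.sqrt_pos.2 (by positivity)
  have hss : n * Real.log n = s * s := (Real.mul_self_sqrt (by positivity)).symm
  have key := log_orderOf_perm_le σ (t := s / 1.378) (by positivity)
  rw [← hn, show n / (s / 1.378) * Real.log n = 1.378 * (n * Real.log n) / s by field_simp, hss,
    show 1.378 * (s * s) / s = 1.378 * s by field_simp] at key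
  rw [Real.logb, div_le_iff₀ (Real.log_pos one_lt_two)]
  have : 4 * s * 0.6931471803 ≤ 4 * s * Real.log 2 := by gcongr; exact Real.log_two_gt_d9.le
  have : s / 1.378 ≤ 0.73 * s := by rw [div_le_iff₀ (by norm_num)]; linarith
  linarith

/-- Collecting one factor of each `x i * d i` on the left conjugates the other ones by elements
which depend only on `x`. -/
theorem exists_prod_ofFn_mul_eq {G : Type*} [Group G] {m : ℕ} (x : Fin m → G) :
    ∃ s : Fin m → G, ∀ d : Fin m → G, (List.ofFn fun i => x i * d i).prod =
      (List.ofFn x).prod * (List.ofFn fun i => (s i)⁻¹ * d i * s i).prod := by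
  induction m with
  | zero => simp
  | succ m ih =>
    obtain ⟨s, hs⟩ := ih fun i => x i.succ
    refine ⟨Fin.cons (List.ofFn fun i : Fin m => x i.succ).prod s, fun d => ?_⟩
    simp only [List.ofFn_succ, List.prod_cons, Fin.cons_zero, Fin.cons_succ, hs fun i => d i.succ]
    group

theorem exists_finset_sup_closure_eq {G : Type*} [Group G] {H L : Subgroup G} (hHL : H ≤ L)
    (hindex : H.relIndex L ≠ 0) :
    ∃ T : Finset G, H ⊔ Subgroup.closure (T : Set G) = L ∧ 2 ^ T.card ≤ H.relIndex L := by
  classical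
  induction hk : H.relIndex L using Nat.strong_induction_on generalizing H with
  | _ k ih =>
  subst hk
  by_cases hLH : L ≤ H
  · exact ⟨∅, by simpa using le_antisymm hHL hLH, by simpa using Nat.one_le_iff_ne_zero.2 hindex⟩
  obtain ⟨x, hxL, hxH⟩ := SetLike.not_le_iff_exists.1 hLH
  set K := H ⊔ Subgroup.closure {x} with hK
  have hHK : H ≤ K := le_sup_left
  have hKL : K ≤ L := sup_le hHL ((Subgroup.closure_le L).2 (by simpa using hxL))
  have hxK : x ∈ K := le_sup_right (a := H) (Subgroup.subset_closure rfl)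
  have hmul := Subgroup.relIndex_mul_relIndex H K L hHK hKL
  have hHK0 : H.relIndex K ≠ 0 := fun h => hindex (by rw [← hmul, h, zero_mul])
  have hKL0 : K.relIndex L ≠ 0 := fun h => hindex (by rw [← hmul, h, mul_zero])
  have hHK1 : H.relIndex K ≠ 1 := fun h => hxH (Subgroup.relIndex_eq_one.1 h hxK)
  have htwo : 2 * K.relIndex L ≤ H.relIndex L := by
    rw [← hmul]
    exact Nat.mul_le_mul_right _ (by lia)
  obtain ⟨T, hT, hcard⟩ := ih _ (by lia) hKL hKL0 rfl
  refine ⟨insert x T, ?_, ?_⟩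
  · rw [Finset.coe_insert, Set.insert_eq, Subgroup.closure_union, ← sup_assoc, ← hK, hT]
  · calc 2 ^ (insert x T).card ≤ 2 ^ (T.card + 1) :=
          Nat.pow_le_pow_right two_pos (Finset.card_insert_le _ _)
      _ ≤ H.relIndex L := by rw [pow_succ]; lia

/-- If powers `g i ^ o i` lie in a normal subgroup `N`, then some choice of conjugates of these
powers generates a subgroup of index at most `∏ i, o i`. -/
theorem IsBoundedlyGeneratedBy.exists_closure_index_le {G : Type*} [Group G] {m : ℕ}
    {g : Fin m → G} (hg : IsBoundedlyGeneratedBy m g) {N : Subgroup G} [N.Normal] {o : Fin m → ℕ}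
    (ho : ∀ i, 0 < o i) (hN : ∀ i, g i ^ o i ∈ N) :
    ∃ h : Fin m → G, Subgroup.closure (Set.range h) ≤ N ∧
      (Subgroup.closure (Set.range h)).FiniteIndex ∧
      (Subgroup.closure (Set.range h)).index ≤ ∏ i, o i := by
  choose s hs using fun r : Fin m → ℕ => exists_prod_ofFn_mul_eq fun i => g i ^ r i
  let h : (Fin m → ℕ) → Fin m → G := fun r i => (s r i)⁻¹ * g i ^ o i * s r i
  have hcover : ⋃ r ∈ Fintype.piFinset fun i => Finset.range (o i),
      (List.ofFn fun i => g i ^ r i).prod • (Subgroup.closure (Set.range (h r)) : Set G) =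
        Set.univ := by
    refine Set.eq_univ_of_forall fun x => ?_
    obtain ⟨k, rfl⟩ := hg x
    have ho' : ∀ i, (0 : ℤ) < o i := fun i => by exact_mod_cast ho i
    let r : Fin m → ℕ := fun i => (k i % o i).toNat
    have hr : ∀ i, (r i : ℤ) = k i % o i := fun i =>
      Int.toNat_of_nonneg (Int.emod_nonneg _ (ho' i).ne')
    have hrlt : ∀ i, r i < o i := fun i => by
      have := Int.emod_lt_of_pos (k i) (ho' i)
      rw [← hr i] at this
      exact_mod_cast this
    have hk : ∀ i, g i ^ k i = g i ^ r i * (g i ^ o i) ^ (k i / o i) := fun i => by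
      rw [← zpow_natCast, ← zpow_natCast, ← zpow_mul, ← zpow_add, hr, Int.emod_add_mul_ediv]
    refine Set.mem_iUnion₂.2 ⟨r, by simpa using hrlt, ?_⟩
    simp only [hk]
    rw [hs r fun i => (g i ^ o i) ^ (k i / o i)]
    refine Set.smul_mem_smul_set (Subgroup.list_prod_mem _ fun y hy => ?_)
    obtain ⟨i, rfl⟩ := List.mem_ofFn.1 hy
    have : (s r i)⁻¹ * (g i ^ o i) ^ (k i / o i) * s r i = h r i ^ (k i / o i) := by
      simpa using (conj_zpow (a := (s r i)⁻¹) (b := g i ^ o i) (i := k i / o i)).symm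
    rw [this]
    exact Subgroup.zpow_mem _ (Subgroup.subset_closure (Set.mem_range_self i)) _
  obtain ⟨r, -, hfin, hle⟩ := Subgroup.exists_index_le_card_of_leftCoset_cover hcover
  refine ⟨h r, ?_, hfin, by simpa using hle⟩
  rw [Subgroup.closure_le]
  rintro _ ⟨i, rfl⟩
  simpa using ‹N.Normal›.conj_mem _ (hN i) (s r i)⁻¹

/-- Let `m` be a positive integer, let `G` be an `m`-boundedly generated group, and let
`L ≤ G` be a subgroup of finite index `n`.  Then `rank L ≤ 2 m² √(n log n) + m`:
there is a generating set of `L` of cardinality at most `2 m² √(n log n) + m`. -/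
theorem rank_le_of_bounded_generation
    {G : Type*} [Group G] (m : ℕ) (hm : 0 < m)
    (hbg : ∃ g : Fin m → G, IsBoundedlyGeneratedBy m g)
    (L : Subgroup G) (n : ℕ) (hn : L.index = n) (hn0 : 0 < n) :
    ∃ S : Finset G, Subgroup.closure (S : Set G) = L ∧
      (S.card : ℝ) ≤ 2 * m ^ 2 * Real.sqrt (n * Real.log n) + m := by
  classical
  obtain ⟨g, hg⟩ := hbg
  rcases Nat.lt_or_ge m 2 with hm2 | hm2
  · obtain rfl : m = 1 := by lia
    have : IsCyclic G := ⟨g 0, fun x => by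
      obtain ⟨k, rfl⟩ := hg x
      exact ⟨k 0, by simp⟩⟩
    obtain ⟨a, ha⟩ := (Subgroup.isCyclic_iff_exists_zpowers_eq_top L).1 inferInstance
    refine ⟨{a}, by rw [Finset.coe_singleton, ← Subgroup.zpowers_eq_closure, ha], ?_⟩
    simp only [Finset.card_singleton, Nat.cast_one]
    linarith [Real.sqrt_nonneg (n * Real.log n)]
  have : L.FiniteIndex := ⟨by lia⟩
  let := Fintype.ofFinite (G ⧸ L)
  have hcard : Fintype.card (G ⧸ L) = n := by rw [← Nat.card_eq_fintype_card, ← hn]; rfl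
  let o : Fin m → ℕ := fun i => orderOf (MulAction.toPermHom G (G ⧸ L) (g i))
  have ho : ∀ i, 0 < o i := fun i => orderOf_pos _
  obtain ⟨h, hN, hfin, hindex⟩ := hg.exists_closure_index_le (N := L.normalCore) ho fun i => by
    rw [Subgroup.normalCore_eq_ker, MonoidHom.mem_ker, map_pow, pow_orderOf_eq_one]
  set H := Subgroup.closure (Set.range h) with hH
  have hHL : H ≤ L := hN.trans L.normalCore_le
  have hrel : H.relIndex L ≤ ∏ i, o i :=
    (Nat.le_of_dvd (Nat.pos_of_ne_zero hfin.index_ne_zero)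
      (Subgroup.relIndex_dvd_index_of_le hHL)).trans hindex
  obtain ⟨T, hT, hTcard⟩ := exists_finset_sup_closure_eq hHL
    (ne_zero_of_dvd_ne_zero hfin.index_ne_zero (Subgroup.relIndex_dvd_index_of_le hHL))
  refine ⟨Finset.univ.image h ∪ T, ?_, ?_⟩
  · rw [Finset.coe_union, Subgroup.closure_union, Finset.coe_image, Finset.coe_univ,
      Set.image_univ, ← hH, hT]
  have hTle : (T.card : ℝ) ≤ m * (4 * Real.sqrt (n * Real.log n)) := by
    have hpow : ((2 : ℝ) ^ T.card) ≤ ∏ i, (o i : ℝ) := by exact_mod_cast hTcard.trans hrel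
    calc (T.card : ℝ) = Real.logb 2 (2 ^ T.card) := by simp [Real.logb_pow]
      _ ≤ Real.logb 2 (∏ i, (o i : ℝ)) := Real.logb_le_logb_of_le one_lt_two (by positivity) hpow
      _ = ∑ i, Real.logb 2 (o i) :=
          Real.logb_prod _ _ fun i _ => by exact_mod_cast (ho i).ne'
      _ ≤ ∑ _i : Fin m, 4 * Real.sqrt (n * Real.log n) :=
          Finset.sum_le_sum fun i _ => by
            simpa only [hcard] using logb_orderOf_perm_le (MulAction.toPermHom G (G ⧸ L) (g i))
      _ = m * (4 * Real.sqrt (n * Real.log n)) := by simp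
  have hcard_union : ((Finset.univ.image h ∪ T).card : ℝ) ≤ m + T.card := by
    have h1 : (Finset.univ.image h).card ≤ m := by
      simpa using Finset.card_image_le (s := Finset.univ) (f := h)
    exact_mod_cast (Finset.card_union_le _ _).trans (Nat.add_le_add_right h1 _)
  have hm2' : (2 : ℝ) ≤ m := by exact_mod_cast hm2
  have : m * (4 * Real.sqrt (n * Real.log n)) ≤ 2 * m ^ 2 * Real.sqrt (n * Real.log n) := by
    have := mul_nonneg (mul_nonneg (Nat.cast_nonneg (α := ℝ) m) (sub_nonneg.2 hm2'))
      (Real.sqrt_nonneg (n * Real.log n))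
    nlinarith
  linarith
end

section
/- Let m be a positive integer, let G be an m-boundedly generated group, and let L ⊴ G be a normal subgroup of finite index n. Then rank(L) ≤ m·log₂(n) + m. -/
open scoped Pointwise in
/-- Moving the powers of the `a i` to the right in `∏ c i * a i ^ q i` conjugates each `a i` by an
element that does not depend on the exponents `q`. -/
theorem exists_isConj_forall_prod_mul_zpow_mem_smul_closure {G : Type*} [Group G] {m : ℕ}
    (c a : Fin m → G) :
    ∃ b : Fin m → G, (∀ i, IsConj (a i) (b i)) ∧ ∀ q : Fin m → ℤ,
      (List.ofFn fun i => c i * a i ^ q i).prod ∈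
        (List.ofFn c).prod • (Subgroup.closure (Set.range b) : Set G) := by
  induction m with
  | zero => exact ⟨a, fun i => i.elim0, fun q => by simp⟩
  | succ m ih =>
    obtain ⟨b, hb, hq⟩ := ih (fun i => c i.succ) (fun i => a i.succ)
    set p := (List.ofFn fun i => c i.succ).prod with hp
    refine ⟨Fin.cons (p⁻¹ * a 0 * p) b, fun i => ?_, fun q => ?_⟩
    · refine Fin.cases ?_ hb i
      exact isConj_iff.2 ⟨p⁻¹, by simp⟩
    · obtain ⟨h, hh, hhq⟩ := hq fun i => q i.succ
      simp only [smul_eq_mul] at hhq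
      refine ⟨(p⁻¹ * a 0 * p) ^ q 0 * h, mul_mem (zpow_mem ?_ _) ?_, ?_⟩
      · exact Subgroup.subset_closure ⟨0, rfl⟩
      · refine Subgroup.closure_mono ?_ hh
        rintro _ ⟨i, rfl⟩
        exact ⟨i.succ, rfl⟩
      · have hconj : (p⁻¹ * a 0 * p) ^ q 0 = p⁻¹ * a 0 ^ q 0 * p := by
          simpa using conj_zpow (a := p⁻¹) (b := a 0) (i := q 0)
        simp only [List.ofFn_succ, List.prod_cons, ← hp, ← hhq, hconj, smul_eq_mul]
        group

/-- A subgroup `H` of finite index in `L` can be enlarged to `L` by adjoining at most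
`log₂ [L : H]` elements. -/
theorem Subgroup.exists_finset_sup_closure_eq_of_relIndex_ne_zero {G : Type*} [Group G]
    {H L : Subgroup G} (hHL : H ≤ L) (h0 : H.relIndex L ≠ 0) :
    ∃ T : Finset G, H ⊔ Subgroup.closure (T : Set G) = L ∧ 2 ^ T.card ≤ H.relIndex L := by
  classical
  induction hN : H.relIndex L using Nat.strong_induction_on generalizing H with
  | _ N ih =>
  subst hN
  by_cases hLH : L ≤ H
  · exact ⟨∅, by simpa using le_antisymm hHL hLH, by simpa using Nat.one_le_iff_ne_zero.2 h0⟩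
  obtain ⟨x, hxL, hxH⟩ := SetLike.not_le_iff_exists.1 hLH
  set K := H ⊔ Subgroup.closure {x} with hK
  have hHK : H ≤ K := le_sup_left
  have hxK : x ∈ K := le_sup_right (a := H) (Subgroup.subset_closure rfl)
  have hKL : K ≤ L := sup_le hHL (by simpa using hxL)
  have hmul := Subgroup.relIndex_mul_relIndex H K L hHK hKL
  have h1 : H.relIndex K ≠ 1 := fun h => hxH (Subgroup.relIndex_eq_one.1 h hxK)
  have hHK0 : H.relIndex K ≠ 0 := fun h => h0 (by rw [← hmul, h, zero_mul])
  have hKL0 : K.relIndex L ≠ 0 := fun h => h0 (by rw [← hmul, h, mul_zero])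
  have h2 : 2 * K.relIndex L ≤ H.relIndex L := by
    rw [← hmul]
    exact Nat.mul_le_mul_right _ (by omega)
  obtain ⟨T, hT, hTcard⟩ := ih (K.relIndex L) (by omega) hKL hKL0 rfl
  refine ⟨insert x T, ?_, ?_⟩
  · rw [Finset.coe_insert, Set.insert_eq, Subgroup.closure_union, ← sup_assoc, ← hK, hT]
  · calc 2 ^ (insert x T).card ≤ 2 ^ (T.card + 1) :=
          Nat.pow_le_pow_right two_pos (Finset.card_insert_le _ _)
      _ = 2 * 2 ^ T.card := pow_succ' _ _
      _ ≤ H.relIndex L := by omega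

open scoped Pointwise in
/-- If `G = ⟨g 0⟩⋯⟨g (m-1)⟩` and `L` is normal of finite index `n`, then some `m`-generated subgroup
of `L` has index at most `n ^ m` in `G`. -/
theorem IsBoundedlyGeneratedBy.exists_closure_range_le {G : Type*} [Group G] {m : ℕ}
    {g : Fin m → G} (hg : IsBoundedlyGeneratedBy m g) (L : Subgroup G) [L.Normal]
    (hL : L.index ≠ 0) :
    ∃ b : Fin m → G, Subgroup.closure (Set.range b) ≤ L ∧
      (Subgroup.closure (Set.range b)).index ≠ 0 ∧
      (Subgroup.closure (Set.range b)).index ≤ L.index ^ m := by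
  set n := L.index with hn
  choose b hconj hb using fun r : Fin m → Fin n =>
    exists_isConj_forall_prod_mul_zpow_mem_smul_closure (fun i => g i ^ (r i : ℕ))
      (fun i => g i ^ n)
  have hcover : ⋃ r ∈ (Finset.univ : Finset (Fin m → Fin n)),
      (List.ofFn fun i => g i ^ (r i : ℕ)).prod •
        (Subgroup.closure (Set.range (b r)) : Set G) = Set.univ := by
    refine Set.eq_univ_of_forall fun x => ?_
    obtain ⟨k, rfl⟩ := hg x
    have hn0 : (n : ℤ) ≠ 0 := by exact_mod_cast hL
    have hlt : ∀ i, (k i % n).toNat < n := fun i => by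
      have := Int.emod_lt_of_pos (k i) (by omega : (0 : ℤ) < n)
      have := Int.emod_nonneg (k i) hn0
      omega
    refine Set.mem_biUnion (Finset.mem_univ fun i => ⟨(k i % n).toNat, hlt i⟩) ?_
    convert hb (fun i => ⟨(k i % n).toNat, hlt i⟩) (fun i => k i / n) using 4 with i
    rw [← zpow_natCast, ← zpow_natCast, ← zpow_mul, ← zpow_add,
      Int.toNat_of_nonneg (Int.emod_nonneg _ hn0), Int.emod_add_mul_ediv]
  obtain ⟨r, -, hfin, hle⟩ := Subgroup.exists_index_le_card_of_leftCoset_cover hcover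
  refine ⟨b r, (Subgroup.closure_le _).2 ?_, hfin.index_ne_zero, by simpa using hle⟩
  rintro _ ⟨i, rfl⟩
  obtain ⟨u, hu⟩ := isConj_iff.1 (hconj r i)
  rw [← hu]
  exact ‹L.Normal›.conj_mem _ (L.pow_index_mem (g i)) u

/-- Let `m` be a positive integer, let `G` be an `m`-boundedly generated group, and let
`L ⊴ G` be a normal subgroup of finite index `n`.  Then `rank L ≤ m log₂ n + m`:
there is a generating set of `L` of cardinality at most `m log₂ n + m`. -/
theorem rank_le_of_bounded_generation_normal
    {G : Type*} [Group G] (m : ℕ) (hm : 0 < m)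
    (hbg : ∃ g : Fin m → G, IsBoundedlyGeneratedBy m g)
    (L : Subgroup G) (hLnormal : L.Normal) (n : ℕ) (hn : L.index = n) (hn0 : 0 < n) :
    ∃ S : Finset G, Subgroup.closure (S : Set G) = L ∧
      (S.card : ℝ) ≤ m * Real.logb 2 n + m := by
  classical
  obtain ⟨g, hg⟩ := hbg
  subst hn
  obtain ⟨b, hbL, h0, hle⟩ := hg.exists_closure_range_le L hn0.ne'
  set H := Subgroup.closure (Set.range b) with hH
  have hmul := Subgroup.relIndex_mul_index hbL
  have hrel0 : H.relIndex L ≠ 0 := fun h => h0 (by rw [← hmul, h, zero_mul])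
  obtain ⟨T, hT, hTcard⟩ := Subgroup.exists_finset_sup_closure_eq_of_relIndex_ne_zero hbL hrel0
  refine ⟨Finset.univ.image b ∪ T, ?_, ?_⟩
  · rw [Finset.coe_union, Subgroup.closure_union, Finset.coe_image, Finset.coe_univ,
      Set.image_univ, hT]
  · have hpow : 2 ^ T.card ≤ L.index ^ m :=
      hTcard.trans ((Nat.le_of_dvd (Nat.pos_of_ne_zero h0) ⟨_, hmul.symm⟩).trans hle)
    have hlog : (T.card : ℝ) ≤ m * Real.logb 2 L.index := by
      rw [← Real.logb_pow, Real.le_logb_iff_rpow_le one_lt_two (by positivity),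
        Real.rpow_natCast]
      exact_mod_cast hpow
    have hb : (Finset.univ.image b).card ≤ m := by
      simpa using Finset.card_image_le (s := Finset.univ) (f := b)
    have hcard : ((Finset.univ.image b ∪ T).card : ℝ) ≤ m + T.card := by
      exact_mod_cast (Finset.card_union_le _ _).trans (Nat.add_le_add_right hb _)
    linarith
end

section
/- Let L be a group and let U ≤ L be a subgroup of finite index. Then d(L) ≤ d(U) + log₂([L : U]). -/
/-- A finite set whose closure has finite index extends to a generating set, each added element
at least halving the index. -/
theorem exists_closure_eq_top_two_pow_card_le {L : Type*} [Group L] (T : Finset L)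
    (hT : (Subgroup.closure (T : Set L)).index ≠ 0) :
    ∃ S : Finset L, Subgroup.closure (S : Set L) = ⊤ ∧
      2 ^ S.card ≤ 2 ^ T.card * (Subgroup.closure (T : Set L)).index := by
  classical
  induction hn : (Subgroup.closure (T : Set L)).index using Nat.strong_induction_on
    generalizing T with
  | _ n ih =>
    subst hn
    by_cases htop : Subgroup.closure (T : Set L) = ⊤
    · exact ⟨T, htop, Nat.le_mul_of_pos_right _ (Nat.pos_of_ne_zero hT)⟩
    obtain ⟨g, hg⟩ : ∃ g, g ∉ Subgroup.closure (T : Set L) := by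
      by_contra! h
      exact htop ((Subgroup.eq_top_iff' _).2 h)
    have hle : Subgroup.closure (T : Set L) ≤ Subgroup.closure (insert g T : Finset L) :=
      Subgroup.closure_mono (by simp)
    have hmul := Subgroup.relIndex_mul_index hle
    have hne_one : (Subgroup.closure (T : Set L)).relIndex
        (Subgroup.closure (insert g T : Finset L)) ≠ 1 := fun h =>
      hg (Subgroup.relIndex_eq_one.1 h (Subgroup.subset_closure (by simp)))
    have hne : (Subgroup.closure (T : Set L)).relIndex
        (Subgroup.closure (insert g T : Finset L)) ≠ 0 := fun h => hT (by rw [← hmul, h, zero_mul])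
    have hne' : (Subgroup.closure ((insert g T : Finset L) : Set L)).index ≠ 0 :=
      fun h => hT (by rw [← hmul, h, mul_zero])
    have htwo : 2 * (Subgroup.closure ((insert g T : Finset L) : Set L)).index ≤
        (Subgroup.closure (T : Set L)).index := by
      rw [← hmul]
      exact Nat.mul_le_mul_right _ (by omega)
    obtain ⟨S, hS, hcard⟩ := ih _ (by omega) (insert g T) hne' rfl
    refine ⟨S, hS, hcard.trans ?_⟩
    calc 2 ^ (insert g T).card * (Subgroup.closure ((insert g T : Finset L) : Set L)).index
        ≤ 2 ^ (T.card + 1) * (Subgroup.closure ((insert g T : Finset L) : Set L)).index := by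
          gcongr
          · norm_num
          · exact Finset.card_insert_le g T
      _ = 2 ^ T.card * (2 * (Subgroup.closure ((insert g T : Finset L) : Set L)).index) := by ring
      _ ≤ _ := Nat.mul_le_mul_left _ htwo

/-- Let `L` be a group and let `U ≤ L` be a subgroup of finite index.  Then
`d(L) ≤ d(U) + log₂ [L : U]`: for every finite generating set `T` of `U` there is a
generating set `S` of `L` with `|S| ≤ |T| + log₂ [L : U]`. -/
theorem rank_le_rank_add_logb_index
    {L : Type*} [Group L] (U : Subgroup L) (hU : U.index ≠ 0)
    (T : Finset L) (hT : Subgroup.closure (T : Set L) = U) :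
    ∃ S : Finset L, Subgroup.closure (S : Set L) = ⊤ ∧
      (S.card : ℝ) ≤ T.card + Real.logb 2 U.index := by
  subst hT
  obtain ⟨S, hS, hcard⟩ := exists_closure_eq_top_two_pow_card_le T hU
  refine ⟨S, hS, ?_⟩
  have hcard' : (2 : ℝ) ^ S.card ≤ 2 ^ T.card * (Subgroup.closure (T : Set L)).index := by
    exact_mod_cast hcard
  have hlog := Real.logb_le_logb_of_le one_lt_two (by positivity) hcard'
  rwa [Real.logb_mul (by positivity) (by exact_mod_cast hU), Real.logb_pow, Real.logb_pow,
    Real.logb_self_eq_one one_lt_two, mul_one, mul_one] at hlog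
end

section
/- For every positive integer n, lcm(1, 2, …, n) ≥ 4^⌊(n−1)/2⌋; in particular lcm(1, 2, …, n) ≥ 2^n / 8, so lcm(1, …, n) grows at least exponentially in n. -/
/-- If every positive integer up to `n + 1` divides `d`, then so does every entry
`(n + 1) * n.choose k` of the denominators of Leibniz's harmonic triangle. -/
theorem succ_mul_choose_dvd_of_forall_dvd {d n k : ℕ}
    (hd : ∀ i, 0 < i → i ≤ n + 1 → i ∣ d) (hk : k ≤ n) : (n + 1) * n.choose k ∣ d := by
  induction k generalizing n with
  | zero => simpa using hd (n + 1) n.succ_pos le_rfl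
  | succ k ih =>
    obtain ⟨n, rfl⟩ : ∃ m, n = m + 1 := ⟨n - 1, by omega⟩
    obtain ⟨a, ha⟩ := ih (n := n) (fun i hi hin => hd i hi (by omega)) (by omega)
    obtain ⟨b, hb⟩ := ih (n := n + 1) hd (by omega)
    have hsucc : (n + 1) * n.choose k = (n + 1).choose (k + 1) * (k + 1) :=
      Nat.add_one_mul_choose_eq n k
    have hsame : n.choose k * (n + 1) = (n + 1).choose k * (n + 1 - k) :=
      Nat.choose_mul_succ_eq n k
    zify [show k ≤ n + 1 by omega] at ha hb hsucc hsame ⊢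
    refine ⟨a - b, mul_right_cancel₀ (b := (k + 1 : ℤ)) (by positivity) ?_⟩
    linear_combination (n + 2 : ℤ) * ha - (n + 1 - k : ℤ) * hb
      + (n + 2 : ℤ) * (a - b) * hsucc + (n + 2 : ℤ) * b * hsame

/-- The least common multiple of `1, …, 2 * m + 1` is at least `4 ^ m`. -/
theorem four_pow_le_lcm_Icc {m n : ℕ} (h : 2 * m + 1 ≤ n) :
    4 ^ m ≤ (Finset.Icc 1 n).lcm id := by
  have hdvd : (2 * m + 1) * (2 * m).choose m ∣ (Finset.Icc 1 n).lcm id :=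
    succ_mul_choose_dvd_of_forall_dvd
      (fun i hi hin => Finset.dvd_lcm (f := id) (Finset.mem_Icc.2 ⟨hi, hin.trans h⟩)) (by omega)
  have hpos : 0 < (Finset.Icc 1 n).lcm id :=
    Nat.pos_of_ne_zero (by simp [Finset.lcm_eq_zero_iff])
  exact (Nat.four_pow_le_two_mul_add_one_mul_central_binom m).trans (Nat.le_of_dvd hpos hdvd)

/-- For every positive integer `n`, `lcm(1, 2, …, n) ≥ 4 ^ ⌊(n−1)/2⌋`; in particular
`lcm(1, …, n) ≥ 2 ^ n / 8`, so `lcm(1, …, n)` grows at least exponentially in `n`. -/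
theorem lcm_range_ge_four_pow (n : ℕ) (hn : 0 < n) :
    4 ^ ((n - 1) / 2) ≤ (Finset.Icc 1 n).lcm id ∧
      (2 : ℝ) ^ n / 8 ≤ (((Finset.Icc 1 n).lcm id : ℕ) : ℝ) := by
  have h : 4 ^ ((n - 1) / 2) ≤ (Finset.Icc 1 n).lcm id := four_pow_le_lcm_Icc (by omega)
  refine ⟨h, le_trans ?_ (Nat.cast_le.2 h)⟩
  have hpow : (2 : ℝ) ^ n ≤ 2 ^ (2 * ((n - 1) / 2) + 3) :=
    pow_le_pow_right₀ one_le_two (by omega)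
  rw [pow_add, pow_mul] at hpow
  norm_num at hpow ⊢
  linarith
end

section
/- Let m be a positive integer, let G be an m-boundedly generated group, and let L ≤ G be a subgroup of finite index n. Then exp(G, L) ≤ g(n)^m, i.e., there exists a positive integer N ≤ g(n)^m such that a^N ∈ L for every a ∈ G, where g is Landau's function. -/
/-- Landau's function: `landau n` is the largest order of an element of the symmetric
group `S_n`. -/
noncomputable def landau (n : ℕ) : ℕ :=
  Finset.univ.sup fun σ : Equiv.Perm (Fin n) => orderOf σ

theorem orderOf_le_landau {n : ℕ} (σ : Equiv.Perm (Fin n)) : orderOf σ ≤ landau n :=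
  Finset.le_sup (f := fun σ : Equiv.Perm (Fin n) => orderOf σ) (Finset.mem_univ σ)

/-- A finite homomorphic image of a group boundedly generated by `g` has at most
`∏ i, orderOf (φ (g i))` elements. -/
theorem IsBoundedlyGeneratedBy.card_range_le {G H : Type*} [Group G] [Group H] [Finite H]
    {m : ℕ} {g : Fin m → G} (hg : IsBoundedlyGeneratedBy m g) (φ : G →* H) :
    Nat.card φ.range ≤ ∏ i, orderOf (φ (g i)) := by
  let F : (∀ i, Subgroup.zpowers (φ (g i))) → H := fun z => (List.ofFn fun i => (z i : H)).prod
  have hsub : (φ.range : Set H) ⊆ Set.range F := by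
    rintro _ ⟨x, rfl⟩
    obtain ⟨k, rfl⟩ := hg x
    refine ⟨fun i => ⟨φ (g i) ^ k i, k i, rfl⟩, ?_⟩
    simp [F, map_list_prod, List.map_ofFn, Function.comp_def]
  calc Nat.card φ.range ≤ Nat.card (Set.range F) := Nat.card_mono (Set.toFinite _) hsub
    _ ≤ Nat.card (∀ i, Subgroup.zpowers (φ (g i))) :=
      Nat.card_le_card_of_surjective _ Set.rangeFactorization_surjective
    _ = ∏ i, orderOf (φ (g i)) := by simp [Nat.card_pi, Nat.card_zpowers]

/-- Let `m` be a positive integer, let `G` be an `m`-boundedly generated group, and let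
`L ≤ G` be a subgroup of finite index `n`.  Then `exp(G, L) ≤ g(n) ^ m` where `g` is
Landau's function: there exists a positive integer `N ≤ g(n) ^ m` such that
`a ^ N ∈ L` for every `a ∈ G`. -/
theorem exp_le_landau_pow_of_bounded_generation
    {G : Type*} [Group G] (m : ℕ) (hm : 0 < m)
    (hbg : ∃ g : Fin m → G, IsBoundedlyGeneratedBy m g)
    (L : Subgroup G) (n : ℕ) (hn : L.index = n) (hn0 : 0 < n) :
    ∃ N : ℕ, 0 < N ∧ N ≤ landau n ^ m ∧ ∀ a : G, a ^ N ∈ L := by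
  obtain ⟨g, hg⟩ := hbg
  have : L.FiniteIndex := ⟨by omega⟩
  let e : G ⧸ L ≃ Fin n := Finite.equivFinOfCardEq hn
  let φ : G →* Equiv.Perm (Fin n) :=
    e.permCongrHom.toMonoidHom.comp (MulAction.toPermHom G (G ⧸ L))
  refine ⟨Nat.card φ.range, Nat.card_pos, ?_, fun a => ?_⟩
  · calc Nat.card φ.range ≤ ∏ i, orderOf (φ (g i)) := hg.card_range_le φ
      _ ≤ ∏ _i : Fin m, landau n := Finset.prod_le_prod' fun i _ => orderOf_le_landau _
      _ = landau n ^ m := by simp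
  · have hφ : φ (a ^ Nat.card φ.range) = 1 := by
      rw [map_pow]
      exact congrArg Subtype.val (pow_card_eq_one' (x := φ.rangeRestrict a))
    have hperm : MulAction.toPermHom G (G ⧸ L) (a ^ Nat.card φ.range) = 1 :=
      e.permCongrHom.injective (hφ.trans (map_one _).symm)
    have hker : a ^ Nat.card φ.range ∈ L.normalCore := by
      rwa [Subgroup.normalCore_eq_ker, MonoidHom.mem_ker]
    exact L.normalCore_le hker
end

section
/- Let m be a positive integer, let G be an m-boundedly generated group, and let L ≤ G be a subgroup of finite index. Then there exists a subgroup U ≤ L such that U can be generated by m elements and [G : U] ≤ exp(G, L)^m; in particular U has finite index in G. -/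
/-- `subgroupExp L` is `exp(G, L)`: the least positive integer `N` such that
`a ^ N ∈ L` for every `a ∈ G`. -/
noncomputable def subgroupExp {G : Type*} [Group G] (L : Subgroup G) : ℕ :=
  sInf {N : ℕ | 0 < N ∧ ∀ a : G, a ^ N ∈ L}

/-- The defining property of `subgroupExp` for a subgroup of finite index. -/
theorem subgroupExp_spec {G : Type*} [Group G] (L : Subgroup G) (hL : L.index ≠ 0) :
    0 < subgroupExp L ∧ ∀ a : G, a ^ subgroupExp L ∈ L := by
  have : L.FiniteIndex := ⟨hL⟩
  exact Nat.sInf_mem (s := {N : ℕ | 0 < N ∧ ∀ a : G, a ^ N ∈ L})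
    ⟨L.normalCore.index, Nat.pos_of_ne_zero Subgroup.FiniteIndex.index_ne_zero,
      fun a => L.normalCore_le (Subgroup.pow_index_mem L.normalCore a)⟩

/-- In a product `a 0 * b 0 * a 1 * b 1 * ⋯` the factors `a i` can be collected on the left,
at the cost of conjugating each `b i` by an element depending only on `a`. -/
theorem exists_conj_prod_ofFn_mul {G : Type*} [Group G] {m : ℕ} (a : Fin m → G) :
    ∃ c : Fin m → G, ∀ b : Fin m → G,
      (List.ofFn fun i => a i * b i).prod =
        (List.ofFn a).prod * (List.ofFn fun i => c i * b i * (c i)⁻¹).prod := by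
  induction m with
  | zero => exact ⟨a, fun b => by simp⟩
  | succ m ih =>
    obtain ⟨c, hc⟩ := ih fun i => a i.succ
    refine ⟨Fin.cons (List.ofFn fun i => a i.succ).prod⁻¹ c, fun b => ?_⟩
    simp only [List.ofFn_succ, List.prod_cons, Fin.cons_zero, Fin.cons_succ,
      hc fun i => b i.succ]
    group

open scoped Pointwise in
/-- Let `m` be a positive integer, let `G` be an `m`-boundedly generated group, and let
`L ≤ G` be a subgroup of finite index.  Then there exists a subgroup `U ≤ L` that can
be generated by `m` elements and satisfies `[G : U] ≤ exp(G, L) ^ m`; in particular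
`U` has finite index in `G`. -/
theorem main_lemma_bounded_generation
    {G : Type*} [Group G] (m : ℕ) (hm : 0 < m)
    (hbg : ∃ g : Fin m → G, IsBoundedlyGeneratedBy m g)
    (L : Subgroup G) (hL : L.index ≠ 0) :
    ∃ U : Subgroup G, U ≤ L ∧
      (∃ S : Finset G, S.card ≤ m ∧ Subgroup.closure (S : Set G) = U) ∧
      U.index ≤ subgroupExp L ^ m ∧ U.index ≠ 0 := by
  classical
  obtain ⟨g, hg⟩ := hbg
  obtain ⟨hpos, hpow⟩ := subgroupExp_spec L hL
  set N := subgroupExp L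
  choose c hc using fun r : Fin m → Fin N =>
    exists_conj_prod_ofFn_mul fun i => g i ^ (r i : ℕ)
  let S : (Fin m → Fin N) → Finset G := fun r =>
    Finset.univ.image fun i => c r i * g i ^ N * (c r i)⁻¹
  let U : (Fin m → Fin N) → Subgroup G := fun r => Subgroup.closure (S r : Set G)
  have hcover : ⋃ r ∈ (Finset.univ : Finset (Fin m → Fin N)),
      (List.ofFn fun i => g i ^ (r i : ℕ)).prod • (U r : Set G) = Set.univ := by
    refine Set.eq_univ_of_forall fun x => ?_
    obtain ⟨k, rfl⟩ := hg x
    have hN : (0 : ℤ) < N := by exact_mod_cast hpos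
    have hlt (i : Fin m) : (k i % N).toNat < N := by
      have := Int.emod_lt_of_pos (k i) hN
      omega
    let r : Fin m → Fin N := fun i => ⟨(k i % N).toNat, hlt i⟩
    have hdiv (i : Fin m) : g i ^ k i = g i ^ (r i : ℕ) * (g i ^ N) ^ (k i / N) := by
      have hr : ((r i : ℕ) : ℤ) = k i % N := Int.toNat_of_nonneg (Int.emod_nonneg _ hN.ne')
      rw [← zpow_natCast, ← zpow_natCast (g i) N, ← zpow_mul, ← zpow_add, hr,
        Int.emod_add_mul_ediv]
    simp only [Set.mem_iUnion]
    refine ⟨r, Finset.mem_univ r, ?_⟩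
    simp only [hdiv, hc r fun i => (g i ^ N) ^ (k i / N)]
    refine Set.smul_mem_smul_set (Subgroup.list_prod_mem _ fun y hy => ?_)
    obtain ⟨i, rfl⟩ := List.mem_ofFn.mp hy
    rw [← conj_zpow]
    exact Subgroup.zpow_mem _ (Subgroup.subset_closure (by simp [S])) _
  obtain ⟨r, -, hfin, hle⟩ := Subgroup.exists_index_le_card_of_leftCoset_cover hcover
  refine ⟨U r, ?_, ⟨S r, ?_, rfl⟩, ?_, hfin.index_ne_zero⟩
  · refine (Subgroup.closure_le L).mpr fun y hy => ?_
    obtain ⟨i, -, rfl⟩ := Finset.mem_image.mp (Finset.mem_coe.mp hy)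
    rw [← conj_pow]
    exact hpow _
  · simpa using Finset.card_image_le (s := Finset.univ)
      (f := fun i => c r i * g i ^ N * (c r i)⁻¹)
  · simpa using hle
end

section
/- Let G be a group that is m-boundedly generated with G = ⟨g₁⟩⋯⟨g_m⟩, and let n be a positive integer. For a tuple k = (k₁, …, k_m) ∈ {0, …, n−1}^m and 1 ≤ ℓ ≤ m+1 set P_ℓ^k := g_ℓ^{k_ℓ} ⋯ g_m^{k_m} (with P_{m+1}^k = 1). Then G is the union, over all k ∈ {0, …, n−1}^m, of the n^m left cosets P₁^k · ⟨ ((P_{ℓ+1}^k)⁻¹ g_ℓ P_{ℓ+1}^k)ⁿ : 1 ≤ ℓ ≤ m ⟩; moreover each of these subgroups is generated by m elements, each of which is an n-th power of an element of G. -/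
open Pointwise

/-- For a tuple `k ∈ {0, …, n-1}^m`, `cosetSubgroup g n k` is the subgroup
`⟨((P (ℓ+1))⁻¹ g ℓ P (ℓ+1)) ^ n : 1 ≤ ℓ ≤ m⟩` where
`P ℓ = g ℓ ^ k ℓ ⋯ g m ^ k m` (one-based indexing, `P (m+1) = 1`). -/
def cosetSubgroup {G : Type*} [Group G] {m : ℕ} (g : Fin m → G) (n : ℕ)
    (k : Fin m → ℕ) : Subgroup G :=
  Subgroup.closure (Set.range fun ℓ : Fin m =>
    ((((List.ofFn fun j : Fin m => g j ^ k j).drop ((ℓ : ℕ) + 1)).prod)⁻¹ * g ℓ *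
      (((List.ofFn fun j : Fin m => g j ^ k j).drop ((ℓ : ℕ) + 1)).prod)) ^ n)

/-- If a subgroup `H` contains the `n`-th powers of the conjugates of `g ℓ` by the tails of
`∏ g j ^ k j`, then `∏ g j ^ a j` and `∏ g j ^ k j` lie in the same left coset of `H` as soon as
`a j = k j + n * q j` for all `j`. -/
theorem inv_prod_mul_prod_mem_of_conj_pow_mem {G : Type*} [Group G] (H : Subgroup G) (n : ℕ)
    {m : ℕ} (g : Fin m → G) (k : Fin m → ℕ) (a q : Fin m → ℤ)
    (ha : ∀ i, a i = k i + n * q i)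
    (hH : ∀ ℓ : Fin m,
      ((((List.ofFn fun j : Fin m => g j ^ k j).drop ((ℓ : ℕ) + 1)).prod)⁻¹ * g ℓ *
        (((List.ofFn fun j : Fin m => g j ^ k j).drop ((ℓ : ℕ) + 1)).prod)) ^ n ∈ H) :
    ((List.ofFn fun j => g j ^ k j).prod)⁻¹ * (List.ofFn fun j => g j ^ a j).prod ∈ H := by
  induction m with
  | zero => simp
  | succ m ih =>
    have htail := ih (fun i => g i.succ) (fun i => k i.succ) (fun i => a i.succ)
      (fun i => q i.succ) (fun i => ha i.succ)
      (fun ℓ => by simpa [List.ofFn_succ] using hH ℓ.succ)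
    have hhead := hH 0
    simp only [List.ofFn_succ, List.prod_cons, Fin.val_zero, zero_add, List.drop_succ_cons,
      List.drop_zero] at hhead ⊢
    set P := (List.ofFn fun i : Fin m => g i.succ ^ k i.succ).prod
    set Q := (List.ofFn fun i : Fin m => g i.succ ^ a i.succ).prod
    have hconj : (P⁻¹ * g 0 * P) ^ ((n : ℤ) * q 0) = P⁻¹ * g 0 ^ ((n : ℤ) * q 0) * P := by
      simpa using conj_zpow (a := P⁻¹) (b := g 0) (i := (n : ℤ) * q 0)
    have hfactor : (g 0 ^ k 0 * P)⁻¹ * (g 0 ^ a 0 * Q) =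
        ((P⁻¹ * g 0 * P) ^ n) ^ q 0 * (P⁻¹ * Q) := by
      rw [← zpow_natCast (P⁻¹ * g 0 * P) n, ← zpow_mul, hconj, ha 0, zpow_add, zpow_natCast]
      group
    rw [hfactor]
    exact H.mul_mem (H.zpow_mem hhead _) htail

/-- Let `G` be `m`-boundedly generated with `G = ⟨g 1⟩⋯⟨g m⟩`, and let `n` be a
positive integer.  For `k = (k 1, …, k m) ∈ {0, …, n-1}^m` and `1 ≤ ℓ ≤ m + 1` set
`P ℓ = g ℓ ^ k ℓ ⋯ g m ^ k m` (so `P (m+1) = 1`).  Then `G` is the union, over all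
such tuples `k`, of the `n ^ m` left cosets
`P 1 • ⟨((P (ℓ+1))⁻¹ g ℓ P (ℓ+1)) ^ n : 1 ≤ ℓ ≤ m⟩`; moreover each of these
subgroups is generated by `m` elements, each of which is an `n`-th power of an
element of `G`. -/
theorem cover_by_cosets_of_bounded_generation
    {G : Type*} [Group G] (m : ℕ) (hm : 0 < m) (g : Fin m → G)
    (hbg : IsBoundedlyGeneratedBy m g) (n : ℕ) (hn : 0 < n) :
    (∀ x : G, ∃ k : Fin m → ℕ, (∀ i, k i < n) ∧
      x ∈ ((List.ofFn fun j : Fin m => g j ^ k j).prod) •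
        (cosetSubgroup g n k : Set G)) ∧
    ∀ k : Fin m → ℕ, (∀ i, k i < n) →
      ∃ S : Finset G, S.card ≤ m ∧ (∀ s ∈ S, ∃ y : G, s = y ^ n) ∧
        Subgroup.closure (S : Set G) = cosetSubgroup g n k := by
  classical
  refine ⟨fun x => ?_, fun k _ => ?_⟩
  · obtain ⟨a, rfl⟩ := hbg x
    have hn0 : (n : ℤ) ≠ 0 := by exact_mod_cast hn.ne'
    have hcast : ∀ i, ((a i % n).toNat : ℤ) = a i % n := fun i =>
      Int.toNat_of_nonneg (Int.emod_nonneg _ hn0)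
    refine ⟨fun i => (a i % n).toNat, fun i => ?_, ?_⟩
    · have := Int.emod_lt_of_pos (a i) (Int.natCast_pos.mpr hn)
      have := hcast i
      beta_reduce
      omega
    · rw [mem_leftCoset_iff]
      refine inv_prod_mul_prod_mem_of_conj_pow_mem _ n g _ a (fun i => a i / n) (fun i => ?_)
        (fun ℓ => Subgroup.subset_closure ⟨ℓ, rfl⟩)
      rw [hcast, Int.emod_add_mul_ediv]
  · refine ⟨Finset.univ.image fun ℓ : Fin m =>
      ((((List.ofFn fun j : Fin m => g j ^ k j).drop ((ℓ : ℕ) + 1)).prod)⁻¹ * g ℓ *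
        (((List.ofFn fun j : Fin m => g j ^ k j).drop ((ℓ : ℕ) + 1)).prod)) ^ n, ?_, ?_, ?_⟩
    · simpa using Finset.card_image_le (s := (Finset.univ : Finset (Fin m)))
    · simp only [Finset.mem_image, Finset.mem_univ, true_and]
      rintro _ ⟨ℓ, rfl⟩
      exact ⟨_, rfl⟩
    · rw [Finset.coe_image, Finset.coe_univ, Set.image_univ, cosetSubgroup]
end

section
/- Let m be a positive integer and let G be an infinite, residually finite, m-boundedly generated group. Then there exists a strictly decreasing infinite chain G ≥ H₀ > H₁ > H₂ > ⋯ of subgroups of finite index in G such that every H_i can be generated by m elements. -/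
/-- If `N` is normal of finite index, the set of products `g 0 ^ k 0 * ⋯ * g (m-1) ^ k (m-1)` is
covered by finitely many left cosets of `m`-generated subgroups of `N`. -/
theorem exists_finite_leftCoset_cover_of_zpow_products {G : Type*} [Group G] (N : Subgroup G)
    [N.Normal] (hN : N.index ≠ 0) (m : ℕ) (g : Fin m → G) :
    ∃ T : Set (G × Subgroup G), T.Finite ∧
      (∀ p ∈ T, p.2 ≤ N ∧
        ∃ S : Finset G, S.card ≤ m ∧ Subgroup.closure (S : Set G) = p.2) ∧
      ∀ k : Fin m → ℤ, ∃ p ∈ T, ∃ c ∈ p.2, (List.ofFn fun i => g i ^ k i).prod = p.1 * c := by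
  classical
  induction m with
  | zero =>
    refine ⟨{(1, ⊥)}, Set.finite_singleton _, ?_, fun k => ⟨(1, ⊥), rfl, 1, one_mem _, by simp⟩⟩
    rintro p rfl
    exact ⟨bot_le, ∅, by simp, by simp⟩
  | succ m ih =>
    obtain ⟨T, hT, hTS, hTk⟩ := ih fun i => g i.succ
    let n : ℤ := N.index
    let F : ℤ → G × Subgroup G → G × Subgroup G := fun a p =>
      (g 0 ^ a * p.1, Subgroup.zpowers (p.1⁻¹ * g 0 ^ n * p.1) ⊔ p.2)
    refine ⟨Set.image2 F (Set.Ico 0 n) T, (Set.finite_Ico _ _).image2 _ hT, ?_, fun k => ?_⟩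
    · rintro _ ⟨a, -, p, hp, rfl⟩
      obtain ⟨hpN, S, hS, hSp⟩ := hTS p hp
      refine ⟨sup_le ?_ hpN, insert (p.1⁻¹ * g 0 ^ n * p.1) S,
        (Finset.card_insert_le _ _).trans (by lia), ?_⟩
      · rw [Subgroup.zpowers_le]
        have h : g 0 ^ n ∈ N := by simpa [n] using N.pow_index_mem (g 0)
        simpa using ‹N.Normal›.conj_mem _ h p.1⁻¹
      · rw [Finset.coe_insert, Set.insert_eq, Subgroup.closure_union, hSp,
          ← Subgroup.zpowers_eq_closure]
    · obtain ⟨p, hp, c, hc, hpc⟩ := hTk fun i => k i.succ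
      have hn : 0 < n := by simp only [n]; lia
      refine ⟨F (k 0 % n) p, ⟨_, ⟨Int.emod_nonneg _ hn.ne', Int.emod_lt_of_pos _ hn⟩, p, hp, rfl⟩,
        (p.1⁻¹ * g 0 ^ n * p.1) ^ (k 0 / n) * c,
        mul_mem (Subgroup.mem_sup_left (Subgroup.zpow_mem_zpowers _ _))
          (Subgroup.mem_sup_right hc), ?_⟩
      have hconj : (p.1⁻¹ * g 0 ^ n * p.1) ^ (k 0 / n) = p.1⁻¹ * (g 0 ^ n) ^ (k 0 / n) * p.1 := by
        simpa using conj_zpow (i := k 0 / n) (a := p.1⁻¹) (b := g 0 ^ n)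
      have hk : g 0 ^ k 0 = g 0 ^ (k 0 % n) * (g 0 ^ n) ^ (k 0 / n) := by
        rw [← zpow_mul, ← zpow_add, Int.emod_add_mul_ediv]
      rw [List.ofFn_succ, List.prod_cons, hpc, hconj, hk]
      simp only [F]
      group

open scoped Pointwise in
/-- In an `m`-boundedly generated group, every finite-index normal subgroup contains an
`m`-generated subgroup of finite index. -/
theorem IsBoundedlyGeneratedBy.exists_le_index_ne_zero {G : Type*} [Group G] {m : ℕ}
    {g : Fin m → G} (hg : IsBoundedlyGeneratedBy m g) (N : Subgroup G) [N.Normal]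
    (hN : N.index ≠ 0) :
    ∃ K ≤ N, K.index ≠ 0 ∧
      ∃ S : Finset G, S.card ≤ m ∧ Subgroup.closure (S : Set G) = K := by
  obtain ⟨T, hT, hTS, hTk⟩ := exists_finite_leftCoset_cover_of_zpow_products N hN m g
  have hcover : ⋃ p ∈ hT.toFinset, p.1 • (p.2 : Set G) = Set.univ := by
    refine Set.eq_univ_of_forall fun x => ?_
    obtain ⟨k, rfl⟩ := hg x
    obtain ⟨p, hp, c, hc, h⟩ := hTk k
    simp only [Set.mem_iUnion]
    exact ⟨p, hT.mem_toFinset.2 hp, c, hc, h.symm⟩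
  obtain ⟨p, hp, hfin⟩ := Subgroup.exists_finiteIndex_of_leftCoset_cover hcover
  obtain ⟨hpN, hS⟩ := hTS p (hT.mem_toFinset.1 hp)
  exact ⟨p.2, hpN, hfin.index_ne_zero, hS⟩

/-- Let `m` be a positive integer and let `G` be an infinite, residually finite,
`m`-boundedly generated group (residual finiteness is stated via the equivalent
characterization: every nontrivial element avoids some finite-index normal subgroup).
Then there exists a strictly decreasing infinite chain `H 0 > H 1 > H 2 > ⋯` of
finite-index subgroups of `G`, each of which can be generated by `m` elements. -/
theorem exists_strict_chain_of_bounded_generation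
    {G : Type*} [Group G] [Infinite G] (m : ℕ) (hm : 0 < m)
    (hbg : ∃ g : Fin m → G, IsBoundedlyGeneratedBy m g)
    (hrf : ∀ x : G, x ≠ 1 → ∃ N : Subgroup G, N.Normal ∧ N.index ≠ 0 ∧ x ∉ N) :
    ∃ H : ℕ → Subgroup G, (∀ i, H (i + 1) < H i) ∧ (∀ i, (H i).index ≠ 0) ∧
      ∀ i, ∃ S : Finset G, S.card ≤ m ∧ Subgroup.closure (S : Set G) = H i := by
  obtain ⟨g, hg⟩ := hbg
  let P : Subgroup G → Prop := fun K =>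
    K.index ≠ 0 ∧ ∃ S : Finset G, S.card ≤ m ∧ Subgroup.closure (S : Set G) = K
  have step : ∀ K : {K // P K}, ∃ L : {K // P K}, L.1 < K.1 := by
    rintro ⟨K, hK, -⟩
    have hbot : K ≠ ⊥ := by
      rintro rfl
      exact hK (by simp)
    obtain ⟨x, hxK, hx⟩ := K.bot_or_exists_ne_one.resolve_left hbot
    obtain ⟨N, hNn, hN, hxN⟩ := hrf x hx
    have : K.FiniteIndex := ⟨hK⟩
    have : N.FiniteIndex := ⟨hN⟩
    obtain ⟨L, hL, hLP⟩ :=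
      hg.exists_le_index_ne_zero (N ⊓ K.normalCore) Subgroup.FiniteIndex.index_ne_zero
    refine ⟨⟨L, hLP⟩, lt_of_le_of_ne (hL.trans (inf_le_right.trans K.normalCore_le)) ?_⟩
    rintro rfl
    exact hxN (hL hxK).1
  obtain ⟨K, -, hK⟩ := hg.exists_le_index_ne_zero ⊤ (by simp)
  choose f hf using step
  let H : ℕ → {K // P K} := fun i => f^[i] ⟨K, hK⟩
  refine ⟨fun i => (H i).1, fun i => ?_, fun i => (H i).2.1, fun i => (H i).2.2⟩
  simp only [H, Function.iterate_succ_apply']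
  exact hf _
end

section
/- Let m be a positive integer and let G be an infinite, residually finite, m-boundedly generated group. Then the rank gradient of G is zero: inf over all finite index subgroups H ≤ G of (rank(H) − 1)/[G : H] equals 0. Equivalently, for every ε > 0 there exists a finite index subgroup H ≤ G with (rank(H) − 1)/[G : H] < ε. -/
section RankGradient

open scoped Pointwise

variable {G : Type*} [Group G]

/-- In an infinite residually finite group, every finite-index normal subgroup contains
finite-index normal subgroups of arbitrarily large index. -/
lemma exists_normal_le_index_ge [Infinite G]
    (hrf : ∀ x : G, x ≠ 1 → ∃ N : Subgroup G, N.Normal ∧ N.index ≠ 0 ∧ x ∉ N)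
    (N : Subgroup G) (hN : N.Normal) (hNi : N.index ≠ 0) (k : ℕ) :
    ∃ N' : Subgroup G, N' ≤ N ∧ N'.Normal ∧ N'.index ≠ 0 ∧ k ≤ N'.index := by
  induction k with
  | zero => exact ⟨N, le_rfl, hN, hNi, Nat.zero_le _⟩
  | succ k ih =>
    obtain ⟨M, hMN, hM, hMi, hkM⟩ := ih
    have hMbot : M ≠ ⊥ := by
      rintro rfl
      rw [Subgroup.index_bot] at hMi
      exact hMi Nat.card_eq_zero_of_infinite
    obtain ⟨⟨x, hxM⟩, hx⟩ := Subgroup.ne_bot_iff_exists_ne_one.1 hMbot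
    have hx1 : x ≠ 1 := fun h => hx (Subtype.ext h)
    obtain ⟨P, hP, hPi, hxP⟩ := hrf x hx1
    have hle : M ⊓ P ≤ M := inf_le_left
    have hidx : (M ⊓ P).index ≠ 0 := Subgroup.index_inf_ne_zero hMi hPi
    refine ⟨M ⊓ P, hle.trans hMN, inferInstance, hidx, ?_⟩
    have hmul := Subgroup.relIndex_mul_index hle
    have hrel : (M ⊓ P).relIndex M ≠ 1 := fun h =>
      hxP ((Subgroup.relIndex_eq_one.1 h) hxM).2
    have hrel0 : (M ⊓ P).relIndex M ≠ 0 := fun h => hidx (by rw [← hmul, h, zero_mul])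
    have h2 : 2 ≤ (M ⊓ P).relIndex M := by omega
    have := Nat.mul_le_mul_right M.index h2
    have := Nat.pos_of_ne_zero hMi
    omega

/-- A finite-index subgroup has a finite set of right coset representatives. -/
lemma exists_finset_rightCoset_reps (H : Subgroup G) (hH : H.index ≠ 0) :
    ∃ R : Finset G, R.card ≤ H.index ∧ ∀ g : G, ∃ r ∈ R, g * r⁻¹ ∈ H := by
  classical
  have : Fintype (G ⧸ H) := Subgroup.fintypeOfIndexNeZero hH
  refine ⟨Finset.univ.image fun q : G ⧸ H => q.out⁻¹, ?_, fun g => ?_⟩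
  · refine Finset.card_image_le.trans_eq ?_
    rw [Finset.card_univ, ← Nat.card_eq_fintype_card, Subgroup.index]
  · refine ⟨_, Finset.mem_image_of_mem _ (Finset.mem_univ ((g⁻¹ : G) : G ⧸ H)), ?_⟩
    have h : (((g⁻¹ : G) : G ⧸ H)) = (((g⁻¹ : G) : G ⧸ H).out : G ⧸ H) :=
      (QuotientGroup.out_eq' _).symm
    simpa using QuotientGroup.eq.1 h

/-- Relative version of `exists_finset_rightCoset_reps`. -/
lemma exists_finset_rightCoset_reps_relIndex (H K : Subgroup G) (hH : H.relIndex K ≠ 0) :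
    ∃ D : Finset G, D.card ≤ H.relIndex K ∧ ∀ g ∈ K, ∃ d ∈ D, g * d⁻¹ ∈ H := by
  classical
  obtain ⟨R, hR, hcov⟩ := exists_finset_rightCoset_reps (H.subgroupOf K) hH
  refine ⟨R.image Subtype.val, Finset.card_image_le.trans hR, fun g hg => ?_⟩
  obtain ⟨r, hr, hgr⟩ := hcov ⟨g, hg⟩
  exact ⟨r, Finset.mem_image_of_mem _ hr, by simpa [Subgroup.mem_subgroupOf] using hgr⟩

/-- An infinite residually finite group has, modulo suitable finite-index normal subgroups,
subsets of arbitrarily small density containing a left translate of every `s`-tuple. -/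
lemma exists_sparse_translate_universal [Infinite G]
    (hrf : ∀ x : G, x ≠ 1 → ∃ N : Subgroup G, N.Normal ∧ N.index ≠ 0 ∧ x ∉ N) (c s : ℕ) :
    ∃ N : Subgroup G, N.Normal ∧ N.index ≠ 0 ∧ ∃ T : Finset G, c * T.card ≤ s * N.index ∧
      ∀ x : Fin s → G, ∃ p : G, ∀ j, ∃ t ∈ T, p * x j * t⁻¹ ∈ N := by
  classical
  induction s with
  | zero => exact ⟨⊤, inferInstance, by simp, ∅, by simp, fun x => ⟨1, fun j => j.elim0⟩⟩
  | succ s ih =>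
    obtain ⟨N, hN, hNi, T, hT, hcov⟩ := ih
    obtain ⟨N', hle, hN', hNi', hk⟩ := exists_normal_le_index_ge hrf N hN hNi (c * N.index)
    have hmul := Subgroup.relIndex_mul_index hle
    have hrel : N'.relIndex N ≠ 0 := fun h => hNi' (by rw [← hmul, h, zero_mul])
    obtain ⟨R, hR, hRcov⟩ := exists_finset_rightCoset_reps N hNi
    obtain ⟨D, hD, hDcov⟩ := exists_finset_rightCoset_reps_relIndex N' N hrel
    refine ⟨N', hN', hNi', D * T ∪ R, ?_, fun x => ?_⟩
    · have h1 : (D * T ∪ R).card ≤ N'.relIndex N * T.card + N.index :=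
        (Finset.card_union_le _ _).trans
          (add_le_add (Finset.card_mul_le.trans (Nat.mul_le_mul_right _ hD)) hR)
      calc c * (D * T ∪ R).card ≤ c * (N'.relIndex N * T.card + N.index) :=
            Nat.mul_le_mul_left _ h1
        _ = N'.relIndex N * (c * T.card) + c * N.index := by ring
        _ ≤ N'.relIndex N * (s * N.index) + N'.index :=
            add_le_add (Nat.mul_le_mul_left _ hT) hk
        _ = (s + 1) * N'.index := by rw [← hmul]; ring
    · obtain ⟨p, hp⟩ := hcov fun j => x j.castSucc
      obtain ⟨r, hr, hpr⟩ := hRcov (p * x (Fin.last s))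
      refine ⟨(p * x (Fin.last s) * r⁻¹)⁻¹ * p, fun j => ?_⟩
      refine Fin.lastCases ?_ (fun j => ?_) j
      · refine ⟨r, Finset.mem_union_right _ hr, ?_⟩
        convert N'.one_mem using 1
        group
      · obtain ⟨t, ht, hpt⟩ := hp j
        obtain ⟨d, hd, hpd⟩ := hDcov _ (N.mul_mem (N.inv_mem hpr) hpt)
        refine ⟨d * t, Finset.mem_union_left _ (Finset.mul_mem_mul hd ht), ?_⟩
        convert hpd using 1
        group

/-- The element of `N` obtained by closing up, via coset representatives, the arrow given by
right multiplication by `a` from the coset `u` to the coset `u * a`. -/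
noncomputable def arrowLoop (N : Subgroup G) [N.Normal] (u : G ⧸ N) (a : G) : G :=
  u.out * a * (u * (a : G ⧸ N)).out⁻¹

lemma arrowLoop_mem (N : Subgroup G) [N.Normal] (u : G ⧸ N) (a : G) : arrowLoop N u a ∈ N := by
  rw [← QuotientGroup.eq_one_iff]
  simp [arrowLoop]

lemma arrowLoop_mul (N : Subgroup G) [N.Normal] (u : G ⧸ N) (a b : G) :
    arrowLoop N u (a * b) = arrowLoop N u a * arrowLoop N (u * (a : G ⧸ N)) b := by
  simp [arrowLoop, mul_assoc]

lemma arrowLoop_one (N : Subgroup G) [N.Normal] (u : G ⧸ N) : arrowLoop N u 1 = 1 := by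
  simp [arrowLoop]

/-- The arrows of a cyclic group between points of `T` are generated by the first-return arrows,
of which there are at most `T.card`. -/
lemma exists_finset_generating_arrowLoops (N : Subgroup G) [N.Normal] (hN : N.index ≠ 0)
    (T : Finset (G ⧸ N)) (g : G) :
    ∃ S : Finset G, S.card ≤ T.card ∧ (S : Set G) ⊆ N ∧
      ∀ u ∈ T, ∀ k : ℤ, u * ((g ^ k : G) : G ⧸ N) ∈ T →
        arrowLoop N u (g ^ k) ∈ Subgroup.closure (S : Set G) := by
  classical
  have hret : ∀ u ∈ T, ∃ d : ℕ, 0 < d ∧ u * ((g ^ d : G) : G ⧸ N) ∈ T := fun u hu => by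
    obtain ⟨d, hd, -, hgd⟩ := Subgroup.exists_pow_mem_of_index_ne_zero hN g
    exact ⟨d, hd, by rwa [(QuotientGroup.eq_one_iff _).2 hgd, mul_one]⟩
  let first : G ⧸ N → ℕ := fun u =>
    sInf {d : ℕ | 0 < d ∧ u * ((g ^ d : G) : G ⧸ N) ∈ T}
  have hfirst : ∀ u ∈ T, 0 < first u ∧ u * ((g ^ first u : G) : G ⧸ N) ∈ T :=
    fun u hu => Nat.sInf_mem (hret u hu)
  let S : Finset G := T.image fun u => arrowLoop N u (g ^ first u)
  have hnat : ∀ k : ℕ, ∀ u ∈ T, u * ((g ^ k : G) : G ⧸ N) ∈ T →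
      arrowLoop N u (g ^ k) ∈ Subgroup.closure (S : Set G) := by
    intro k
    induction k using Nat.strong_induction_on with
    | _ k ih =>
      intro u hu huk
      rcases Nat.eq_zero_or_pos k with rfl | hk
      · simp [arrowLoop_one]
      · obtain ⟨hpos, hmem⟩ := hfirst u hu
        have hle : first u ≤ k := Nat.sInf_le ⟨hk, huk⟩
        obtain ⟨l, rfl⟩ := Nat.exists_eq_add_of_le hle
        rw [pow_add, arrowLoop_mul]
        refine Subgroup.mul_mem _
          (Subgroup.subset_closure (Finset.mem_coe.2 (Finset.mem_image_of_mem _ hu)))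
          (ih l (by omega) _ hmem ?_)
        rwa [pow_add, QuotientGroup.mk_mul, ← mul_assoc] at huk
  refine ⟨S, Finset.card_image_le, ?_, fun u hu k huk => ?_⟩
  · intro y hy
    obtain ⟨u, -, rfl⟩ := Finset.mem_image.1 (Finset.mem_coe.1 hy)
    exact arrowLoop_mem N u _
  · obtain ⟨n, rfl | rfl⟩ := k.eq_nat_or_neg
    · rw [zpow_natCast] at huk ⊢
      exact hnat n u hu huk
    · rw [zpow_neg, zpow_natCast] at huk ⊢
      have h1 := arrowLoop_mul N u (g ^ n)⁻¹ (g ^ n)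
      rw [inv_mul_cancel, arrowLoop_one] at h1
      rw [eq_inv_of_mul_eq_one_left h1.symm]
      exact Subgroup.inv_mem _ (hnat n _ huk (by simpa using hu))

/-- If `x i.castSucc` to `x i.succ` is multiplication by `a i`, a subgroup containing the closed-up
arrows of all the `a i` contains the closed-up arrow of the full partial product. -/
lemma arrowLoop_partialProd_mem (N M : Subgroup G) [N.Normal] {m : ℕ} (a : Fin m → G)
    (u : G ⧸ N)
    (h : ∀ i, arrowLoop N (u * ((Fin.partialProd a i.castSucc : G) : G ⧸ N)) (a i) ∈ M)
    (i : Fin (m + 1)) : arrowLoop N u (Fin.partialProd a i) ∈ M := by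
  induction i using Fin.induction with
  | zero => simp [arrowLoop_one]
  | succ i ih =>
    rw [Fin.partialProd_succ, arrowLoop_mul]
    exact M.mul_mem ih (h i)

/-- A subgroup finitely many two-sided translates of which cover the group has finite index. -/
lemma index_ne_zero_of_two_sided_cover (M : Subgroup G) (E : Finset G)
    (h : ∀ x : G, ∃ a ∈ E, ∃ b ∈ E, a * x * b⁻¹ ∈ M) : M.index ≠ 0 := by
  classical
  have hcov : ⋃ e ∈ E ×ˢ E, (e.1⁻¹ * e.2) •
      ((M.map (MulAut.conj e.2⁻¹).toMonoidHom : Subgroup G) : Set G) = Set.univ := by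
    refine Set.eq_univ_of_forall fun x => ?_
    obtain ⟨a, ha, b, hb, hx⟩ := h x
    refine Set.mem_biUnion (x := (a, b)) (Finset.mem_product.2 ⟨ha, hb⟩) ?_
    refine (mem_leftCoset_iff _).2 ⟨a * x * b⁻¹, hx, ?_⟩
    simp [mul_assoc]
  obtain ⟨e, -, he⟩ := Subgroup.exists_finiteIndex_of_leftCoset_cover hcov
  have := he.index_ne_zero
  rwa [← Subgroup.index_map_equiv M (MulAut.conj e.2⁻¹)]

end RankGradient

/-- Let `m` be a positive integer and let `G` be an infinite, residually finite,
`m`-boundedly generated group (residual finiteness is stated via the equivalent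
characterization: every nontrivial element avoids some finite-index normal subgroup).
Then the rank gradient of `G` is `0`: for every `ε > 0` there is a finite-index
subgroup `H ≤ G` with `(rank H − 1) / [G : H] < ε`, witnessed by a generating set
`S` of `H` with `(|S| − 1) / [G : H] < ε`. -/
theorem rank_gradient_zero_of_bounded_generation
    {G : Type*} [Group G] [Infinite G] (m : ℕ) (hm : 0 < m)
    (hbg : ∃ g : Fin m → G, IsBoundedlyGeneratedBy m g)
    (hrf : ∀ x : G, x ≠ 1 → ∃ N : Subgroup G, N.Normal ∧ N.index ≠ 0 ∧ x ∉ N) :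
    ∀ ε : ℝ, 0 < ε → ∃ H : Subgroup G, H.index ≠ 0 ∧
      ∃ S : Finset G, Subgroup.closure (S : Set G) = H ∧
        ((S.card : ℝ) - 1) / (H.index : ℝ) < ε := by
  classical
  intro ε hε
  obtain ⟨g, hg⟩ := hbg
  obtain ⟨c, hc⟩ := exists_nat_gt ((m * (m + 1) : ℝ) / ε)
  obtain ⟨N, hN, hNi, T, hT, hcov⟩ := exists_sparse_translate_universal hrf c (m + 1)
  let TQ : Finset (G ⧸ N) := T.image (QuotientGroup.mk : G → G ⧸ N)
  have hTQ : TQ.card ≤ T.card := Finset.card_image_le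
  choose S hScard hSN hS using exists_finset_generating_arrowLoops N hNi TQ
  let U : Finset G := Finset.univ.biUnion fun i : Fin m => S (g i)
  have hUcard : U.card ≤ m * T.card := by
    simpa using Finset.card_biUnion_le_card_mul Finset.univ (fun i : Fin m => S (g i)) T.card
      fun i _ => (hScard (g i)).trans hTQ
  have hUN : Subgroup.closure (U : Set G) ≤ N := by
    rw [Subgroup.closure_le]
    intro y hy
    obtain ⟨i, -, hi⟩ := Finset.mem_biUnion.1 (Finset.mem_coe.1 hy)
    exact hSN (g i) hi
  have hindex : (Subgroup.closure (U : Set G)).index ≠ 0 := by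
    refine index_ne_zero_of_two_sided_cover _ (TQ.image Quotient.out) fun x => ?_
    obtain ⟨k, hk⟩ := hg x
    obtain ⟨p, hp⟩ := hcov (Fin.partialProd fun i => g i ^ k i)
    have hmem : ∀ j, (p : G ⧸ N) * ((Fin.partialProd (fun i => g i ^ k i) j : G) : G ⧸ N) ∈ TQ := by
      intro j
      obtain ⟨t, ht, hpt⟩ := hp j
      refine Finset.mem_image.2 ⟨t, ht, ?_⟩
      rw [← QuotientGroup.mk_mul, eq_comm, ← mul_inv_eq_one]
      exact (QuotientGroup.eq_one_iff _).2 hpt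
    have hx : x = Fin.partialProd (fun i => g i ^ k i) (Fin.last m) := by
      rw [hk, Fin.partialProd, Fin.val_last, List.take_of_length_le (by simp)]
    have hp0 : (p : G ⧸ N) ∈ TQ := by simpa using hmem 0
    refine ⟨_, Finset.mem_image_of_mem _ hp0, _, Finset.mem_image_of_mem _ (hmem (Fin.last m)), ?_⟩
    rw [hx]
    refine arrowLoop_partialProd_mem N _ _ _ (fun i => ?_) (Fin.last m)
    refine Subgroup.closure_mono ?_ (hS (g i) _ (hmem i.castSucc) (k i) ?_)
    · exact Finset.coe_subset.2
        (Finset.subset_biUnion_of_mem (fun i : Fin m => S (g i)) (Finset.mem_univ i))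
    · simpa [Fin.partialProd_succ, mul_assoc] using hmem i.succ
  refine ⟨_, hindex, U, rfl, ?_⟩
  have hle : N.index ≤ (Subgroup.closure (U : Set G)).index :=
    Nat.le_of_dvd (Nat.pos_of_ne_zero hindex) (Subgroup.index_dvd_of_le hUN)
  generalize (Subgroup.closure (U : Set G)).index = n at hindex hle
  have hn : (0 : ℝ) < n := by exact_mod_cast Nat.pos_of_ne_zero hindex
  have hcpos : (0 : ℝ) < c := lt_of_le_of_lt (by positivity) hc
  rw [div_lt_iff₀ hε] at hc
  rw [div_lt_iff₀ hn]
  have hcU : (c : ℝ) * U.card ≤ m * (m + 1) * n := by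
    have : c * U.card ≤ m * (m + 1) * n :=
      calc c * U.card ≤ c * (m * T.card) := Nat.mul_le_mul_left _ hUcard
        _ = m * (c * T.card) := by ring
        _ ≤ m * ((m + 1) * n) :=
            Nat.mul_le_mul_left _ (hT.trans (Nat.mul_le_mul_left _ hle))
        _ = m * (m + 1) * n := by ring
    exact_mod_cast this
  have hlt : (c : ℝ) * U.card < c * (ε * n) := by nlinarith
  have := lt_of_mul_lt_mul_left hlt hcpos.le
  linarith
end

section
/- Let m be a positive integer, let G be an m-boundedly generated group, and let (H_i)_{i∈ℕ} be a sequence of finite index subgroups of G with [G : H_i] → ∞. Then (rank(H_i) − 1)/[G : H_i] → 0 as i → ∞; in particular the rank gradient of any chain of finite index subgroups of G with indices tending to infinity is zero. -/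
open Filter

/-- The rank of a subgroup `H` of `G`: the smallest cardinality of a (finite)
generating set of `H`. -/
noncomputable def subgroupRank {G : Type*} [Group G] (H : Subgroup G) : ℕ :=
  sInf {k : ℕ | ∃ S : Finset G, Subgroup.closure (S : Set G) = H ∧ S.card = k}

/-- If `H` contains `⟨S⟩` and `⟨S⟩` has finite index, then `S` can be enlarged to a generating set
of `H` by adding at most `log₂ [G : ⟨S⟩]` elements. -/
lemma exists_closure_eq_two_pow_card_le {G : Type*} [Group G] (H : Subgroup G) (S : Finset G)
    (hS : Subgroup.closure (S : Set G) ≤ H) (h0 : (Subgroup.closure (S : Set G)).index ≠ 0) :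
    ∃ T : Finset G, Subgroup.closure (T : Set G) = H ∧
      2 ^ T.card ≤ 2 ^ S.card * (Subgroup.closure (S : Set G)).index := by
  classical
  induction hn : (Subgroup.closure (S : Set G)).index using Nat.strong_induction_on generalizing S
    with
  | _ n ih =>
    subst hn
    by_cases hHS : H ≤ Subgroup.closure (S : Set G)
    · exact ⟨S, le_antisymm hS hHS, Nat.le_mul_of_pos_right _ (Nat.pos_of_ne_zero h0)⟩
    obtain ⟨h, hh, hhS⟩ := SetLike.not_le_iff_exists.mp hHS
    have hle : Subgroup.closure (S : Set G) ≤ Subgroup.closure ((insert h S : Finset G) : Set G) :=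
      Subgroup.closure_mono (by simp)
    have hmul := Subgroup.relIndex_mul_index hle
    have hrel : 2 ≤ (Subgroup.closure (S : Set G)).relIndex
        (Subgroup.closure ((insert h S : Finset G) : Set G)) := by
      have hne0 : (Subgroup.closure (S : Set G)).relIndex
        (Subgroup.closure ((insert h S : Finset G) : Set G)) ≠ 0 := by
        intro h'
        rw [h', zero_mul] at hmul
        exact h0 hmul.symm
      have hne1 : (Subgroup.closure (S : Set G)).relIndex
          (Subgroup.closure ((insert h S : Finset G) : Set G)) ≠ 1 := fun h' =>
        hhS (Subgroup.relIndex_eq_one.mp h' (Subgroup.subset_closure (by simp)))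
      omega
    have hne : (Subgroup.closure ((insert h S : Finset G) : Set G)).index ≠ 0 := by
      intro h'
      rw [h', mul_zero] at hmul
      exact h0 hmul.symm
    have htwo : 2 * (Subgroup.closure ((insert h S : Finset G) : Set G)).index ≤
        (Subgroup.closure (S : Set G)).index :=
      hmul ▸ Nat.mul_le_mul_right _ hrel
    obtain ⟨T, hT, hcard⟩ := ih _ (by omega) (insert h S)
      ((Subgroup.closure_le H).mpr (by
        rw [Finset.coe_insert]
        exact Set.insert_subset hh (Subgroup.subset_closure.trans hS))) hne rfl
    refine ⟨T, hT, hcard.trans ?_⟩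
    calc 2 ^ (insert h S).card * (Subgroup.closure ((insert h S : Finset G) : Set G)).index
        ≤ 2 ^ (S.card + 1) * (Subgroup.closure ((insert h S : Finset G) : Set G)).index :=
          Nat.mul_le_mul_right _ (Nat.pow_le_pow_right two_pos (Finset.card_insert_le h S))
      _ = 2 ^ S.card * (2 * (Subgroup.closure ((insert h S : Finset G) : Set G)).index) := by
          ring
      _ ≤ _ := Nat.mul_le_mul_left _ htwo

/-- A translate `s⟨g₀⟩⋯⟨gₘ₋₁⟩` of a product of `m` cyclic subgroups is covered by at most
`[G : H] ^ m` right cosets of subgroups of `H`, each generated by at most `m` elements. -/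
lemma exists_finset_rightCoset_cover {G : Type*} [Group G] (H : Subgroup G) (h0 : H.index ≠ 0)
    (m : ℕ) (g : Fin m → G) (s : G) :
    ∃ F : Finset (Finset G × G), F.card ≤ H.index ^ m ∧
      (∀ p ∈ F, p.1.card ≤ m ∧ Subgroup.closure (p.1 : Set G) ≤ H) ∧
      ∀ k : Fin m → ℤ, ∃ p ∈ F, ∃ v ∈ Subgroup.closure (p.1 : Set G),
        s * (List.ofFn fun i => g i ^ k i).prod = v * p.2 := by
  classical
  induction m generalizing s with
  | zero => exact ⟨{(∅, s)}, by simp, by simp, by simp⟩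
  | succ m ih =>
    obtain ⟨a, ha0, han, haH⟩ := Subgroup.exists_pow_mem_of_index_ne_zero
      (H := H.comap (MulAut.conj s).toMonoidHom)
      (by rwa [Subgroup.index_comap_of_surjective _ (MulAut.conj s).surjective]) (g 0)
    rw [Subgroup.index_comap_of_surjective _ (MulAut.conj s).surjective] at han
    have haH' : s * g 0 ^ a * s⁻¹ ∈ H := by simpa using haH
    choose F hFcard hFgen hFcover using fun r : ℕ => ih (fun i => g i.succ) (s * g 0 ^ r)
    refine ⟨(Finset.range a).biUnion fun r =>
      (F r).image fun p => (insert (s * g 0 ^ a * s⁻¹) p.1, p.2), ?_, ?_, ?_⟩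
    · calc _ ≤ (Finset.range a).card * H.index ^ m :=
            Finset.card_biUnion_le_card_mul _ _ _ fun r _ =>
              Finset.card_image_le.trans (hFcard r)
        _ ≤ H.index * H.index ^ m := Nat.mul_le_mul_right _ (by simpa using han)
        _ = _ := (pow_succ' _ _).symm
    · intro p hp
      simp only [Finset.mem_biUnion, Finset.mem_image] at hp
      obtain ⟨r, -, q, hq, rfl⟩ := hp
      refine ⟨(Finset.card_insert_le _ _).trans (Nat.succ_le_succ (hFgen r q hq).1), ?_⟩
      rw [Subgroup.closure_le, Finset.coe_insert]
      exact Set.insert_subset haH' (Subgroup.subset_closure.trans (hFgen r q hq).2)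
    · intro k
      have haZ : (0 : ℤ) < a := by exact_mod_cast ha0
      obtain ⟨r, hr⟩ := Int.eq_ofNat_of_zero_le (Int.emod_nonneg (k 0) haZ.ne')
      have hra : r < a := by
        have := Int.emod_lt_of_pos (k 0) haZ
        omega
      obtain ⟨p, hp, v, hv, hvp⟩ := hFcover r fun i => k i.succ
      refine ⟨(insert (s * g 0 ^ a * s⁻¹) p.1, p.2), ?_,
        (s * g 0 ^ a * s⁻¹) ^ (k 0 / a) * v, ?_, ?_⟩
      · simp only [Finset.mem_biUnion, Finset.mem_image]
        exact ⟨r, Finset.mem_range.mpr hra, p, hp, rfl⟩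
      · exact mul_mem (zpow_mem (Subgroup.subset_closure (by simp)) _)
          (Subgroup.closure_mono (by simp) hv)
      · have hk : g 0 ^ k 0 = (g 0 ^ a) ^ (k 0 / a) * g 0 ^ r := by
          rw [← zpow_natCast, ← zpow_natCast, ← zpow_mul, ← zpow_add, ← hr]
          congr 1
          exact (Int.mul_ediv_add_emod (k 0) a).symm
        rw [List.ofFn_succ, List.prod_cons, hk, mul_assoc _ v, ← hvp, conj_zpow]
        group

open scoped Pointwise in
/-- Finite index subgroups of an `m`-boundedly generated group have rank logarithmic in the
index. -/
lemma two_pow_subgroupRank_le {G : Type*} [Group G] {m : ℕ} {g : Fin m → G}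
    (hg : IsBoundedlyGeneratedBy m g) (H : Subgroup G) (h0 : H.index ≠ 0) :
    2 ^ subgroupRank H ≤ (2 * H.index) ^ m := by
  obtain ⟨F, hFcard, hFgen, hFcover⟩ := exists_finset_rightCoset_cover H h0 m g 1
  have hcover : ⋃ p ∈ F, p.2⁻¹ • (Subgroup.closure (p.1 : Set G) : Set G) = Set.univ := by
    refine Set.eq_univ_of_forall fun x => ?_
    obtain ⟨k, hk⟩ := hg x⁻¹
    obtain ⟨p, hp, v, hv, hvp⟩ := hFcover k
    rw [one_mul, ← hk] at hvp
    simp only [Set.mem_iUnion]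
    refine ⟨p, hp, v⁻¹, inv_mem hv, ?_⟩
    change p.2⁻¹ * v⁻¹ = x
    rw [← mul_inv_rev, ← hvp, inv_inv]
  obtain ⟨p, hp, hfin, hidx⟩ := Subgroup.exists_index_le_card_of_leftCoset_cover hcover
  obtain ⟨T, hT, hcard⟩ :=
    exists_closure_eq_two_pow_card_le H p.1 (hFgen p hp).2 hfin.index_ne_zero
  calc 2 ^ subgroupRank H ≤ 2 ^ T.card :=
        Nat.pow_le_pow_right two_pos (Nat.sInf_le ⟨T, hT, rfl⟩)
    _ ≤ 2 ^ p.1.card * (Subgroup.closure (p.1 : Set G)).index := hcard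
    _ ≤ 2 ^ m * H.index ^ m :=
        Nat.mul_le_mul (Nat.pow_le_pow_right two_pos (hFgen p hp).1) (hidx.trans hFcard)
    _ = _ := (mul_pow _ _ _).symm

/-- Let `m` be a positive integer, let `G` be an `m`-boundedly generated group, and
let `(H i)` be a sequence of finite-index subgroups of `G` with `[G : H i] → ∞`.
Then `(rank (H i) − 1) / [G : H i] → 0`; in particular the rank gradient of any
chain of finite-index subgroups of `G` with indices tending to infinity is zero. -/
theorem rank_gradient_tendsto_zero_of_bounded_generation
    {G : Type*} [Group G] (m : ℕ) (hm : 0 < m)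
    (hbg : ∃ g : Fin m → G, IsBoundedlyGeneratedBy m g)
    (H : ℕ → Subgroup G) (hfin : ∀ i, (H i).index ≠ 0)
    (hidx : Tendsto (fun i => (H i).index) atTop atTop) :
    Tendsto (fun i => ((subgroupRank (H i) : ℝ) - 1) / ((H i).index : ℝ))
      atTop (nhds 0) := by
  obtain ⟨g, hg⟩ := hbg
  have hreal : Tendsto (fun i => ((H i).index : ℝ)) atTop atTop :=
    tendsto_natCast_atTop_atTop.comp hidx
  have hinv : Tendsto (fun i => ((H i).index : ℝ)⁻¹) atTop (nhds 0) :=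
    tendsto_inv_atTop_zero.comp hreal
  have hlog : Tendsto (fun i => Real.log (H i).index / ((H i).index : ℝ)) atTop (nhds 0) :=
    Real.isLittleO_log_id_atTop.tendsto_div_nhds_zero.comp hreal
  have hbound : ∀ i, (subgroupRank (H i) : ℝ) ≤
      m / Real.log 2 * (Real.log 2 + Real.log (H i).index) := by
    intro i
    have hpos : (0 : ℝ) < (H i).index := by exact_mod_cast Nat.pos_of_ne_zero (hfin i)
    have hlog2 : 0 < Real.log 2 := Real.log_pos one_lt_two
    have hpow : (2 : ℝ) ^ subgroupRank (H i) ≤ (2 * (H i).index) ^ m := by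
      exact_mod_cast two_pow_subgroupRank_le hg (H i) (hfin i)
    have := Real.log_le_log (by positivity) hpow
    rw [Real.log_pow, Real.log_pow, Real.log_mul two_ne_zero hpos.ne'] at this
    rwa [div_mul_eq_mul_div, le_div_iff₀ hlog2]
  have hlower : Tendsto (fun i => -((H i).index : ℝ)⁻¹) atTop (nhds 0) := by
    simpa using hinv.neg
  have hupper : Tendsto (fun i => m / Real.log 2 *
      (Real.log 2 * ((H i).index : ℝ)⁻¹ + Real.log (H i).index / ((H i).index : ℝ)))
      atTop (nhds 0) := by
    simpa using ((hinv.const_mul (Real.log 2)).add hlog).const_mul (m / Real.log 2)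
  refine tendsto_of_tendsto_of_tendsto_of_le_of_le hlower hupper (fun i => ?_) fun i => ?_
  · have hnonneg : (0 : ℝ) ≤ subgroupRank (H i) / (H i).index := by positivity
    simp only [sub_div, one_div]
    linarith
  · calc ((subgroupRank (H i) : ℝ) - 1) / (H i).index
        ≤ (m / Real.log 2 * (Real.log 2 + Real.log (H i).index)) / (H i).index := by
          gcongr
          linarith [hbound i]
      _ = _ := by ring
end

section
/- Let G = SL₄(ℤ), let r be a positive integer, let p₁, …, p_r be the first r odd primes, and let L_r ≤ G be the preimage under the reduction map G → ∏_{i=1}^r SL₄(𝔽_{p_i}) of the subgroup ∏_{i=1}^r {±I₄}. Then L_r is a normal subgroup of finite index in G and rank(L_r) ≥ r. -/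
instance : Fact (Even (Fintype.card (Fin 4))) := ⟨⟨2, rfl⟩⟩

/-- The `i`-th odd prime (`i = 0` gives `3`): the `(i+1)`-st prime number. -/
noncomputable def oddPrime (i : ℕ) : ℕ := Nat.nth Nat.Prime (i + 1)

/-- Simultaneous reduction map `SL₄(ℤ) → ∏_{i<r} SL₄(𝔽_{pᵢ})`, where
`p₀, …, p_{r-1}` are the first `r` odd primes. -/
noncomputable def redMap (r : ℕ) :
    Matrix.SpecialLinearGroup (Fin 4) ℤ →*
      ∀ i : Fin r, Matrix.SpecialLinearGroup (Fin 4) (ZMod (oddPrime i)) :=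
  Pi.monoidHom fun i =>
    Matrix.SpecialLinearGroup.map (Int.castRingHom (ZMod (oddPrime i)))

/-- `Lr r ≤ SL₄(ℤ)` is the preimage under the reduction map
`SL₄(ℤ) → ∏_{i<r} SL₄(𝔽_{pᵢ})` of the subgroup `∏_{i<r} {±I₄}`
(the subgroup `{±I₄}` is the cyclic subgroup generated by `-I₄`). -/
noncomputable def Lr (r : ℕ) : Subgroup (Matrix.SpecialLinearGroup (Fin 4) ℤ) :=
  Subgroup.comap (redMap r)
    (Subgroup.pi Set.univ fun _ => Subgroup.zpowers (-1))

lemma prime_oddPrime (i : ℕ) : (oddPrime i).Prime :=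
  Nat.nth_mem_of_infinite Nat.infinite_setOfPred_prime _

instance fact_prime_oddPrime (i : ℕ) : Fact (oddPrime i).Prime := ⟨prime_oddPrime i⟩

lemma oddPrime_injective : Function.Injective oddPrime := fun i j h => by
  simpa using Nat.nth_injective Nat.infinite_setOfPred_prime h

lemma two_lt_oddPrime (i : ℕ) : 2 < oddPrime i := by
  have h : Nat.nth Nat.Prime 0 < Nat.nth Nat.Prime (i + 1) :=
    Nat.nth_strictMono Nat.infinite_setOfPred_prime (Nat.succ_pos i)
  rwa [Nat.nth_prime_zero_eq_two] at h

open scoped Pointwise in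
/-- A group generated by `n` central elements of exponent two has at most `2 ^ n` elements. -/
lemma card_closure_le_two_pow {G : Type*} [Group G] (T : Finset G)
    (hc : ∀ t ∈ T, t ∈ Subgroup.center G) (h2 : ∀ t ∈ T, t ^ 2 = 1) :
    Nat.card (Subgroup.closure (T : Set G)) ≤ 2 ^ T.card := by
  classical
  induction T using Finset.induction_on with
  | empty => simp
  | insert a T ha ih =>
    have : (Subgroup.zpowers a).Normal := by
      have hle : Subgroup.zpowers a ≤ Subgroup.center G := by
        simpa using hc a (Finset.mem_insert_self a T)
      exact ⟨fun n hn g => by rwa [(Subgroup.mem_center_iff.1 (hle hn) g), mul_inv_cancel_right]⟩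
    rw [Finset.coe_insert, Set.insert_eq, Subgroup.closure_union, ← Subgroup.zpowers_eq_closure,
      Finset.card_insert_of_notMem ha, pow_succ, mul_comm (2 ^ _)]
    calc Nat.card ↥(Subgroup.zpowers a ⊔ Subgroup.closure (T : Set G))
        = Nat.card ((Subgroup.zpowers a : Set G) * (Subgroup.closure (T : Set G) : Set G) :
            Set G) := by
          rw [← Subgroup.normal_mul]; rfl
      _ ≤ _ := Set.natCard_mul_le
      _ ≤ 2 * 2 ^ T.card := by
          refine Nat.mul_le_mul ?_ (ih (fun t ht => hc t (Finset.mem_insert_of_mem ht))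
            fun t ht => h2 t (Finset.mem_insert_of_mem ht))
          have : Nat.card (Subgroup.zpowers a) ≤ 2 := by
            rw [Nat.card_zpowers]
            exact orderOf_le_of_pow_eq_one two_pos (h2 a (Finset.mem_insert_self a T))
          exact this

/-- An integral matrix of determinant one, congruent to `e • 1` modulo every divisor of
`e ^ 2 - 1`. -/
def scalarLift (e : ℤ) : Matrix.SpecialLinearGroup (Fin 4) ℤ :=
  ⟨!![2 * e - e ^ 3, e ^ 2 - 1, 0, 0; 1 - e ^ 2, e, 0, 0;
      0, 0, 2 * e - e ^ 3, e ^ 2 - 1; 0, 0, 1 - e ^ 2, e], by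
    simp [Matrix.det_succ_row_zero, Fin.sum_univ_succ, Fin.succAbove]
    ring⟩

lemma coe_map_scalarLift {R : Type*} [CommRing R] (e : ℤ) (he : (e : R) ^ 2 = 1) :
    (Matrix.SpecialLinearGroup.map (Int.castRingHom R) (scalarLift e) : Matrix (Fin 4) (Fin 4) R)
      = (e : R) • 1 := by
  have h3 : (e : R) ^ 3 = e := by rw [pow_succ, he, one_mul]
  rw [Matrix.SpecialLinearGroup.map_apply_coe]
  ext i j
  fin_cases i <;> fin_cases j <;> simp [scalarLift, he, h3, two_mul]

section SignGroup

variable {R : Type*} [CommRing R]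

lemma mem_zpowers_neg_one_iff {x : Matrix.SpecialLinearGroup (Fin 4) R} :
    x ∈ Subgroup.zpowers (-1) ↔ x = 1 ∨ x = -1 := by
  constructor
  · rintro ⟨k, rfl⟩
    rcases Int.even_or_odd k with hk | hk
    · exact .inl hk.neg_one_zpow
    · exact .inr hk.neg_one_zpow
  · rintro (rfl | rfl)
    · exact one_mem _
    · exact Subgroup.mem_zpowers _

lemma exists_int_of_mem_zpowers_neg_one {x : Matrix.SpecialLinearGroup (Fin 4) R}
    (hx : x ∈ Subgroup.zpowers (-1)) :
    ∃ e : ℤ, (e : R) ^ 2 = 1 ∧ (x : Matrix (Fin 4) (Fin 4) R) = (e : R) • 1 := by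
  rcases mem_zpowers_neg_one_iff.1 hx with rfl | rfl
  · exact ⟨1, by simp⟩
  · exact ⟨-1, by simp⟩

end SignGroup

/-- The group `∏ {±I₄}` of sign vectors inside `∏ SL₄(𝔽_{pᵢ})`. -/
noncomputable def signGroup (r : ℕ) :
    Subgroup (∀ i : Fin r, Matrix.SpecialLinearGroup (Fin 4) (ZMod (oddPrime i))) :=
  Subgroup.pi Set.univ fun _ => Subgroup.zpowers (-1)

lemma mem_signGroup_iff {r : ℕ}
    {x : ∀ i : Fin r, Matrix.SpecialLinearGroup (Fin 4) (ZMod (oddPrime i))} :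
    x ∈ signGroup r ↔ ∀ i, x i = 1 ∨ x i = -1 := by
  simp [signGroup, Subgroup.mem_pi, mem_zpowers_neg_one_iff]

lemma signGroup_le_center (r : ℕ) : signGroup r ≤ Subgroup.center _ := fun x hx => by
  rw [Subgroup.mem_center_iff]
  intro g
  funext i
  rcases mem_signGroup_iff.1 hx i with h | h <;> simp [h]

lemma sq_eq_one_of_mem_signGroup {r : ℕ}
    {x : ∀ i : Fin r, Matrix.SpecialLinearGroup (Fin 4) (ZMod (oddPrime i))}
    (hx : x ∈ signGroup r) : x ^ 2 = 1 := by
  funext i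
  rcases mem_signGroup_iff.1 hx i with h | h <;> simp [h]

lemma one_ne_neg_one_specialLinearGroup (i : ℕ) :
    (1 : Matrix.SpecialLinearGroup (Fin 4) (ZMod (oddPrime i))) ≠ -1 := fun h => by
  have : Fact (2 < oddPrime i) := ⟨two_lt_oddPrime i⟩
  have h00 := congrArg
    (fun M : Matrix.SpecialLinearGroup (Fin 4) (ZMod (oddPrime i)) => M.1 0 0) h
  exact ZMod.neg_one_ne_one (by simpa using h00.symm)

lemma two_pow_le_card_signGroup (r : ℕ) : 2 ^ r ≤ Nat.card (signGroup r) := by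
  let f : (Fin r → Bool) → signGroup r := fun b =>
    ⟨fun i => if b i then 1 else -1, mem_signGroup_iff.2 fun i => by cases b i <;> simp⟩
  have hf : Function.Injective f := fun b c h => by
    funext i
    have hi := congrFun (congrArg Subtype.val h) i
    have hne := one_ne_neg_one_specialLinearGroup i
    revert hi
    cases hb : b i <;> cases hc : c i <;> simp [f, hb, hc, hne, hne.symm]
  simpa using Nat.card_le_card_of_injective f hf

lemma signGroup_le_range_redMap (r : ℕ) : signGroup r ≤ (redMap r).range := fun x hx => by
  have hx' : ∀ i, x i ∈ Subgroup.zpowers (-1) := fun i =>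
    mem_zpowers_neg_one_iff.2 (mem_signGroup_iff.1 hx i)
  choose ε hsq hε using fun i => exists_int_of_mem_zpowers_neg_one (hx' i)
  obtain ⟨k, hk⟩ := Nat.chineseRemainderOfFinset
    (fun i : Fin r => (ε i : ZMod (oddPrime i)).val) (fun i => oddPrime i) Finset.univ
    (fun i _ => (prime_oddPrime i).ne_zero) fun i _ j _ hij =>
      (Nat.coprime_primes (prime_oddPrime i) (prime_oddPrime j)).2
        fun h => hij (Fin.ext (oddPrime_injective h))
  have hk' : ∀ i : Fin r, ((k : ℤ) : ZMod (oddPrime i)) = ε i := fun i => by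
    have := (ZMod.natCast_eq_natCast_iff _ _ _).2 (hk i (Finset.mem_univ i))
    simpa using this
  refine ⟨scalarLift k, funext fun i => Subtype.ext ?_⟩
  exact (coe_map_scalarLift (R := ZMod (oddPrime i)) k (by rw [hk', hsq])).trans
    (by rw [hk', hε])

/-- Let `G = SL₄(ℤ)`, let `r` be a positive integer, let `p₁, …, p_r` be the first `r`
odd primes, and let `L_r ≤ G` be the preimage under the reduction map
`G → ∏ SL₄(𝔽_{pᵢ})` of `∏ {±I₄}`.  Then `L_r` is a normal subgroup of finite index
in `G`, and `rank L_r ≥ r`: every generating set of `L_r` has at least `r` elements. -/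
theorem rank_Lr_ge
    (r : ℕ) (hr : 0 < r) :
    (Lr r).Normal ∧ (Lr r).index ≠ 0 ∧
      ∀ S : Finset (Matrix.SpecialLinearGroup (Fin 4) ℤ),
        Subgroup.closure (S : Set (Matrix.SpecialLinearGroup (Fin 4) ℤ)) = Lr r →
          r ≤ S.card := by
  classical
  have hL : Lr r = (signGroup r).comap (redMap r) := rfl
  have hnormal : (signGroup r).Normal :=
    ⟨fun x hx g => by
      rwa [Subgroup.mem_center_iff.1 (signGroup_le_center r hx) g, mul_inv_cancel_right]⟩
  refine ⟨hL ▸ hnormal.comap _, ?_, fun S hS => ?_⟩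
  · rw [hL, Subgroup.index_comap]
    exact Subgroup.FiniteIndex.index_ne_zero
  · have hmap : Subgroup.closure ((S.image (redMap r) : Finset _) : Set _) = signGroup r := by
      rw [Finset.coe_image, ← MonoidHom.map_closure, hS, hL,
        Subgroup.map_comap_eq_self (signGroup_le_range_redMap r)]
    have hmem : ∀ t ∈ S.image (redMap r), t ∈ signGroup r := fun t ht =>
      hmap ▸ Subgroup.subset_closure (Finset.mem_coe.2 ht)
    have hcard := card_closure_le_two_pow (S.image (redMap r))
      (fun t ht => signGroup_le_center r (hmem t ht))
      fun t ht => sq_eq_one_of_mem_signGroup (hmem t ht)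
    rw [hmap] at hcard
    exact ((Nat.pow_le_pow_iff_right one_lt_two).1
      ((two_pow_le_card_signGroup r).trans hcard)).trans Finset.card_image_le
end

section
/- For all sufficiently large positive integers r there exists a normal subgroup L of G = SL₄(ℤ) of finite index n = [G : L] such that rank(L) ≥ r and log(n)/log(log(n)) ≤ 48r; consequently rank(L) ≥ log(n)/(48·log(log(n))), where log denotes the natural logarithm. Thus the rank of finite index normal subgroups of SL₄(ℤ) can grow at least like log(n)/(48·log log(n)) as a function of the index n. -/
open Matrix

/-- The scalar matrices `ε • 1` with `ε ^ 2 = 1`, as a homomorphism into `SL₄(R)`. -/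
def scalarSignHom (R : Type*) [CommRing R] :
    rootsOfUnity 2 R →* SpecialLinearGroup (Fin 4) R where
  toFun u := ⟨scalar (Fin 4) ((u : Rˣ) : R), by
    have h : (((u : Rˣ) : R)) ^ 2 = 1 := (mem_rootsOfUnity' 2 (u : Rˣ)).1 u.2
    rw [scalar_apply, det_diagonal, Finset.prod_const, Finset.card_univ, Fintype.card_fin,
      show 4 = 2 * 2 from rfl, pow_mul, h, one_pow]⟩
  map_one' := Subtype.ext (by simp)
  map_mul' u v := Subtype.ext (map_mul (scalar (Fin 4)) ((u : Rˣ) : R) ((v : Rˣ) : R))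

lemma coe_scalarSignHom {R : Type*} [CommRing R] (u : rootsOfUnity 2 R) :
    (scalarSignHom R u : Matrix (Fin 4) (Fin 4) R) = scalar (Fin 4) ((u : Rˣ) : R) := rfl

lemma scalarSignHom_injective (R : Type*) [CommRing R] :
    Function.Injective (scalarSignHom R) := fun u v h => by
  have h' := congrArg (fun A : SpecialLinearGroup (Fin 4) R => A.1 0 0) h
  simp only [coe_scalarSignHom, scalar_apply, diagonal_apply_eq] at h'
  exact Subtype.ext (Units.ext h')

instance scalarSignHom_range_normal (R : Type*) [CommRing R] : (scalarSignHom R).range.Normal where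
  conj_mem := by
    rintro _ ⟨u, rfl⟩ g
    have h : g * scalarSignHom R u = scalarSignHom R u * g := Subtype.ext
      (scalar_commute ((u : Rˣ) : R) (Commute.all _) (g : Matrix (Fin 4) (Fin 4) R)).symm
    rw [h, mul_inv_cancel_right]
    exact ⟨u, rfl⟩

/-- Reduction modulo `M` on `SL₄(ℤ)`. -/
abbrev reductionMod (M : ℕ) :
    SpecialLinearGroup (Fin 4) ℤ →* SpecialLinearGroup (Fin 4) (ZMod M) :=
  SpecialLinearGroup.map (Int.castRingHom (ZMod M))

/-- The integer matrices of determinant one that reduce modulo `M` to a scalar matrix `ε • 1` with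
`ε ^ 2 = 1`. -/
def scalarSignSubgroup (M : ℕ) : Subgroup (SpecialLinearGroup (Fin 4) ℤ) :=
  (scalarSignHom (ZMod M)).range.comap (reductionMod M)

/-- Square roots of one modulo `M` lift to matrices in `SL₄(ℤ)` which are scalar modulo `M`. -/
lemma scalarSignHom_range_le_reductionMod_range (M : ℕ) :
    (scalarSignHom (ZMod M)).range ≤ (reductionMod M).range := by
  rintro _ ⟨u, rfl⟩
  obtain ⟨e, he⟩ := ZMod.intCast_surjective (((u : (ZMod M)ˣ) : ZMod M))
  have hu : (((u : (ZMod M)ˣ) : ZMod M)) ^ 2 = 1 := (mem_rootsOfUnity' 2 (u : (ZMod M)ˣ)).1 u.2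
  obtain ⟨k, hk⟩ : (M : ℤ) ∣ e ^ 2 - 1 := by
    rw [← ZMod.intCast_eq_intCast_iff_dvd_sub, Int.cast_pow, he, hu, Int.cast_one]
  have hdet : det !![e, k * M, 0, 0; -(k * M), e * (1 - k * M), 0, 0;
      0, 0, e, k * M; 0, 0, -(k * M), e * (1 - k * M)] = 1 := by
    have h : e * (e * (1 - k * M)) + k * M * (k * M) = 1 := by linear_combination (1 - k * M) * hk
    simp [det_succ_row_zero, Fin.sum_univ_succ, Fin.succAbove]
    linear_combination (e * (e * (1 - k * M)) + k * M * (k * M) + 1) * h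
  refine ⟨⟨_, hdet⟩, Subtype.ext ?_⟩
  ext i j
  rw [coe_scalarSignHom, ← he, scalar_apply]
  change ((_ : ℤ) : ZMod M) = _
  fin_cases i <;> fin_cases j <;> simp [diagonal]

lemma index_scalarSignSubgroup_ne_zero (M : ℕ) [NeZero M] : (scalarSignSubgroup M).index ≠ 0 := by
  rw [scalarSignSubgroup, Subgroup.index_comap]
  have := Subgroup.isFiniteRelIndex_of_finiteIndex (H := (scalarSignHom (ZMod M)).range)
    (K := (reductionMod M).range)
  exact Subgroup.relIndex_ne_zero

lemma index_scalarSignSubgroup_le (M : ℕ) [NeZero M] : (scalarSignSubgroup M).index ≤ M ^ 16 := by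
  rw [scalarSignSubgroup, Subgroup.index_comap]
  calc (scalarSignHom (ZMod M)).range.relIndex (reductionMod M).range
      ≤ Nat.card (reductionMod M).range :=
        Nat.le_of_dvd Nat.card_pos (Subgroup.relIndex_dvd_card _ _)
    _ ≤ Nat.card (SpecialLinearGroup (Fin 4) (ZMod M)) := Subgroup.card_le_card_group _
    _ ≤ Nat.card (Matrix (Fin 4) (Fin 4) (ZMod M)) :=
        Nat.card_le_card_of_injective _ Subtype.coe_injective
    _ = M ^ 16 := by
        simp only [Matrix, Nat.card_pi, Nat.card_zmod, Finset.prod_const, Finset.card_univ,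
          Fintype.card_fin, ← pow_mul]

lemma le_index_scalarSignSubgroup (M : ℕ) [NeZero M] : M ≤ (scalarSignSubgroup M).index := by
  have : (scalarSignSubgroup M).FiniteIndex := ⟨index_scalarSignSubgroup_ne_zero M⟩
  have h01 : (0 : Fin 4) ≠ 1 := by decide
  conv_lhs => rw [← Nat.card_zmod M]
  refine Nat.card_le_card_of_injective (fun a : ZMod M =>
    (SpecialLinearGroup.transvection h01 (a.val : ℤ) :
      SpecialLinearGroup (Fin 4) ℤ ⧸ scalarSignSubgroup M)) fun a b hab => ?_
  obtain ⟨u, hu⟩ := QuotientGroup.eq.1 hab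
  rw [SpecialLinearGroup.transvection_inv, ← SpecialLinearGroup.transvection_add] at hu
  have h := congrArg (fun A : SpecialLinearGroup (Fin 4) (ZMod M) => A.1 0 1) hu
  simp [coe_scalarSignHom, SpecialLinearGroup.transvection_coe] at h
  exact (neg_add_eq_zero.1 h.symm)

lemma card_rootsOfUnity_two_le_two_pow_card {M : ℕ} [NeZero M]
    {S : Finset (SpecialLinearGroup (Fin 4) ℤ)}
    (hS : Subgroup.closure (S : Set (SpecialLinearGroup (Fin 4) ℤ)) = scalarSignSubgroup M) :
    Nat.card (rootsOfUnity 2 (ZMod M)) ≤ 2 ^ S.card := by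
  have : Group.FG (scalarSignSubgroup M) := hS ▸ inferInstance
  have hrank : Group.rank (scalarSignSubgroup M) ≤ S.card :=
    (Subgroup.rank_congr hS.symm).trans_le (Subgroup.rank_closure_finset_le_card S)
  let φ : scalarSignSubgroup M →* rootsOfUnity 2 (ZMod M) :=
    (MonoidHom.ofInjective (scalarSignHom_injective (ZMod M))).symm.toMonoidHom.comp
      ((reductionMod M).subgroupComap _)
  have hφ : Function.Surjective φ := by
    refine (MonoidHom.ofInjective (scalarSignHom_injective (ZMod M))).symm.surjective.comp
      (f := (reductionMod M).subgroupComap _) ?_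
    rintro ⟨x, hx⟩
    obtain ⟨g, rfl⟩ := scalarSignHom_range_le_reductionMod_range M hx
    exact ⟨⟨g, hx⟩, rfl⟩
  have hdvd := card_dvd_exponent_pow_rank' (rootsOfUnity 2 (ZMod M)) (n := 2)
    fun u => Subtype.ext u.2
  exact (Nat.le_of_dvd (by positivity) hdvd).trans
    (Nat.pow_le_pow_right two_pos ((Group.rank_le_of_surjective φ hφ).trans hrank))

/-- A product of `r` distinct odd primes has at least `2 ^ r` square roots of one. -/
lemma two_pow_card_le_card_rootsOfUnity {P : Finset ℕ} (hP : ∀ p ∈ P, p.Prime ∧ 2 < p)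
    [NeZero (∏ p : P, (p : ℕ))] :
    2 ^ P.card ≤ Nat.card (rootsOfUnity 2 (ZMod (∏ p : P, (p : ℕ)))) := by
  have hcop : Pairwise (Function.onFun Nat.Coprime fun p : P => (p : ℕ)) := fun p q hpq =>
    (Nat.coprime_primes (hP p p.2).1 (hP q q.2).1).2 fun h => hpq (Subtype.ext h)
  let E := ZMod.prodEquivPi (fun p : P => (p : ℕ)) hcop
  let s : (P → ℤˣ) → ZMod (∏ p : P, (p : ℕ)) := fun u => E.symm fun p => ((u p : ℤ) : ZMod p)
  have hs : ∀ u, s u ^ 2 = 1 := fun u => by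
    rw [← map_pow, ← map_one E.symm]
    congr 1
    ext p
    rcases Int.units_eq_one_or (u p) with h | h <;> simp [h]
  have hinj : Function.Injective fun u => rootsOfUnity.mkOfPowEq (s u) (hs u) := by
    intro u v huv
    have h : s u = s v := by
      simpa only [rootsOfUnity.val_mkOfPowEq_coe] using congrArg
        (fun x : rootsOfUnity 2 (ZMod (∏ p : P, (p : ℕ))) => x.1.1) huv
    have h := E.symm.injective h
    funext p
    have hp := congrFun h p
    have : Fact (2 < (p : ℕ)) := ⟨(hP p p.2).2⟩
    rcases Int.units_eq_one_or (u p) with hu | hu <;>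
      rcases Int.units_eq_one_or (v p) with hv | hv <;>
      simp [hu, hv, ZMod.neg_one_ne_one, ZMod.neg_one_ne_one.symm] at hp ⊢
  calc 2 ^ P.card = Nat.card (P → ℤˣ) := by simp [Nat.card_eq_fintype_card]
    _ ≤ _ := Nat.card_le_card_of_injective _ hinj

lemma add_one_le_primeCounting_cube {r : ℕ} (hr : 10 ≤ r) : r + 1 ≤ Nat.primeCounting (r ^ 3) := by
  have hr' : (10 : ℝ) ≤ r := by exact_mod_cast hr
  have h := Chebyshev.pi_ge (r ^ 3)
  push_cast at h
  have hlog : 0 < Real.log r := Real.log_pos (by linarith)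
  have hle : Real.log r ≤ r := Real.log_le_self (by linarith)
  have hsucc : Real.log ((r : ℝ) ^ 3 + 1) ≤ Real.log 2 + 3 * r := by
    calc Real.log ((r : ℝ) ^ 3 + 1) ≤ Real.log (2 * (r : ℝ) ^ 3) := by
          apply Real.log_le_log (by positivity)
          linarith [one_le_pow₀ (n := 3) (by linarith : (1 : ℝ) ≤ r)]
      _ = Real.log 2 + 3 * Real.log r := by
          rw [Real.log_mul (by norm_num) (by positivity), Real.log_pow]
          norm_num
      _ ≤ _ := by linarith
  have hmain : (r + 1 : ℝ) ≤ ((r : ℝ) ^ 3 * Real.log 2 - Real.log ((r : ℝ) ^ 3 + 1)) /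
      Real.log ((r : ℝ) ^ 3) := by
    rw [Real.log_pow, le_div_iff₀ (by push_cast; positivity)]
    push_cast
    have h2 := Real.log_two_gt_d9
    have h2' := Real.log_two_lt_d9
    have h3 : (r : ℝ) ^ 3 * 0.69 ≤ (r : ℝ) ^ 3 * Real.log 2 := by gcongr; linarith
    have h4 : (r + 1 : ℝ) * (3 * Real.log r) ≤ (r + 1) * (3 * r) := by gcongr
    nlinarith [mul_nonneg (sub_nonneg.2 hr') (sub_nonneg.2 hr'),
      mul_nonneg (sq_nonneg (r : ℝ)) (sub_nonneg.2 hr')]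
  exact_mod_cast hmain.trans h

lemma exists_finset_odd_primes_le_cube {r : ℕ} (hr : 10 ≤ r) :
    ∃ P : Finset ℕ, P.card = r ∧ ∀ p ∈ P, p.Prime ∧ 2 < p ∧ p ≤ r ^ 3 := by
  have hcard : r ≤ ((Nat.primesLE (r ^ 3)).erase 2).card := by
    have h := Finset.pred_card_le_card_erase (s := Nat.primesLE (r ^ 3)) (a := 2)
    rw [Nat.primesLE_card_eq_primeCounting] at h
    have := add_one_le_primeCounting_cube hr
    omega
  obtain ⟨P, hP, hPr⟩ := Finset.exists_subset_card_eq hcard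
  refine ⟨P, hPr, fun p hp => ?_⟩
  obtain ⟨h2, hmem⟩ := Finset.mem_erase.1 (hP hp)
  obtain ⟨hle, hprime⟩ := Nat.mem_primesLE.1 hmem
  exact ⟨hprime, lt_of_le_of_ne hprime.two_le h2.symm, hle⟩

lemma log_div_log_log_le_of_le {r : ℕ} (hr : 2 ≤ r) {n M : ℕ} (hMn : M ≤ n) (hnM : n ≤ M ^ 16)
    (hM : 3 ^ r ≤ M) (hM' : M ≤ (r ^ 3) ^ r) :
    Real.log n / Real.log (Real.log n) ≤ 48 * r := by
  have hr' : (2 : ℝ) ≤ r := by exact_mod_cast hr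
  have hlogr : 0 < Real.log r := Real.log_pos (by linarith)
  have hn : 3 ^ r ≤ n := hM.trans hMn
  have hn0 : 0 < n := lt_of_lt_of_le (by positivity) hn
  have hlow : (r : ℝ) ≤ Real.log n := by
    have h3 : 1 ≤ Real.log 3 := by
      rw [Real.le_log_iff_exp_le (by norm_num)]
      linarith [Real.exp_one_lt_d9]
    calc (r : ℝ) ≤ r * Real.log 3 := le_mul_of_one_le_right (by positivity) h3
      _ = Real.log ((3 : ℝ) ^ r) := (Real.log_pow _ _).symm
      _ ≤ Real.log n := Real.log_le_log (by positivity) (by exact_mod_cast hn)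
  have hup : Real.log n ≤ 48 * r * Real.log r := by
    have h : n ≤ r ^ (48 * r) := hnM.trans ((Nat.pow_le_pow_left hM' 16).trans_eq (by
      rw [← pow_mul, ← pow_mul]; congr 1; ring))
    calc Real.log n ≤ Real.log ((r : ℝ) ^ (48 * r)) :=
          Real.log_le_log (by exact_mod_cast hn0) (by exact_mod_cast h)
      _ = 48 * r * Real.log r := by rw [Real.log_pow]; push_cast; ring
  have hll : Real.log r ≤ Real.log (Real.log n) := Real.log_le_log (by linarith) hlow
  rw [div_le_iff₀ (hlogr.trans_le hll)]
  exact hup.trans (by gcongr)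

/-- For all sufficiently large positive integers `r` there exists a normal subgroup
`L` of `G = SL₄(ℤ)` of finite index `n = [G : L]` such that `rank L ≥ r` and
`log n / log (log n) ≤ 48 r`; consequently every generating set of `L` has at least
`log n / (48 log (log n))` elements, i.e. `rank L ≥ log n / (48 log log n)`. -/
theorem exists_normal_subgroup_rank_ge_log_div_loglog :
    ∃ r₀ : ℕ, ∀ r : ℕ, r₀ ≤ r →
      ∃ L : Subgroup (Matrix.SpecialLinearGroup (Fin 4) ℤ), L.Normal ∧ L.index ≠ 0 ∧
        Real.log (L.index : ℝ) / Real.log (Real.log (L.index : ℝ)) ≤ 48 * r ∧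
        ∀ S : Finset (Matrix.SpecialLinearGroup (Fin 4) ℤ),
          Subgroup.closure (S : Set (Matrix.SpecialLinearGroup (Fin 4) ℤ)) = L →
            (r : ℝ) ≤ S.card ∧
            Real.log (L.index : ℝ) / (48 * Real.log (Real.log (L.index : ℝ))) ≤
              S.card := by
  refine ⟨10, fun r hr => ?_⟩
  obtain ⟨P, rfl, hP⟩ := exists_finset_odd_primes_le_cube hr
  have hP' : ∀ p ∈ P, p.Prime ∧ 2 < p := fun p hp => ⟨(hP p hp).1, (hP p hp).2.1⟩
  set M := ∏ p : P, (p : ℕ)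
  have hMP : M = ∏ p ∈ P, p := Finset.prod_coe_sort P id
  have hlow : 3 ^ P.card ≤ M := hMP ▸ Finset.pow_card_le_prod P id 3 fun p hp => (hP p hp).2.1
  have hup : M ≤ (P.card ^ 3) ^ P.card :=
    hMP ▸ Finset.prod_le_pow_card P id _ fun p hp => (hP p hp).2.2
  have : NeZero M := ⟨(lt_of_lt_of_le (by positivity) hlow).ne'⟩
  have hlog := log_div_log_log_le_of_le (by omega) (le_index_scalarSignSubgroup M)
    (index_scalarSignSubgroup_le M) hlow hup
  refine ⟨scalarSignSubgroup M, Subgroup.normal_comap _, index_scalarSignSubgroup_ne_zero M, hlog,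
    fun S hS => ?_⟩
  have hcard : P.card ≤ S.card := (Nat.pow_le_pow_iff_right one_lt_two).1
    ((two_pow_card_le_card_rootsOfUnity hP').trans (card_rootsOfUnity_two_le_two_pow_card hS))
  have hcard' : (P.card : ℝ) ≤ S.card := by exact_mod_cast hcard
  refine ⟨hcard', le_trans ?_ hcard'⟩
  rw [mul_comm, ← div_div, div_le_iff₀ (by norm_num)]
  linarith
end
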